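/- arXiv:2302.04731 — 2 statements merged into one kernel-verified Lean document; each statement's English description precedes it below -/
import Mathlib

section
/- For every hypothesis class 𝓗 ⊆ {0,1}^ℕ, the following three conditions are equivalent: (a) the effective VC dimension of 𝓗 is finite; (b) 𝓗 is CPAC learnable; (c) 𝓗 is contained in some properly SCPAC learnable hypothesis class 𝓗̂. -/
/-!
A computable `k`-witness `w` for `H` yields the class `goodClass k w` of hypotheses that disagree
with `w` on every increasing `(k + 1)`-tuple lying strictly below a point of their support. It
contains `H`, and its VC dimension is at most `k + 1`: on `k + 2` points, following `w` on the first
`k + 1` of them and taking the value `true` at the last is impossible (`vcDimAtMost_goodClass`). The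
class is closed under truncation to an initial segment, and for a finitely supported hypothesis,
coded by the binary digits of a natural number, membership is decidable. Searching the finitely many
codes supported below a bound on the sample is therefore a computable proper empirical risk
minimiser (`ermLearner`).

Empirical risk minimisation over a class of VC dimension at most `d` satisfies the PAC inequality
from the explicit sample size `64 n⁸ (d + 1)²` on (`pacCondition_of_erm`). By comparison with a ghost
sample, the expected excess risk is bounded by the expected largest difference between the numbers
of errors on two independent samples. Swapping the two entries of each pair of examples
independently does not change the law (`pairE_swapAvg`), so the latter is bounded through the
moment generating function of Rademacher sums (`swapAvg_exp_le`) and the Sauer–Shelah bound on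
the number of behaviours (`exists_representatives`), as in Massart's lemma (`exists_excess`).
Markov's inequality turns the bound in expectation into one in probability; it applies because a
proper learner has nonnegative excess risk. The sample size is computable in `n`, so `goodClass k w`
is properly SCPAC learnable. Its learner also learns each of its subclasses, as the infimum of the
errors can only grow on a subclass.

Conversely, let a computable learner satisfy the PAC inequality for `H` at accuracy `1 / 9` with
sample size `m`. Given `2 m` points, averaging over all labellings shows that some labelling makes
its average error, over all samples of size `m` from these points, at least `1 / 4`
(`exists_hard_labeling`): at least half of the points are unseen, and there a prediction is right
for exactly half of the labellings. Such a labelling is found by a finite computable search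
(`pickHard`). It is not realised by any hypothesis in `H`, since under the uniform distribution on
the labelled points the expected error would then be at most `1 / 9 + 1 / 9 < 1 / 4`. The search is
thus a computable `(2 m - 1)`-witness.

Expectations over independent draws are iterated sums in `ℝ≥0∞` (`iidE`, `pairE`), which makes
Tonelli's theorem available without measurability side conditions.
-/

open Filter
open scoped ENNReal

/-- A hypothesis is a function `ℕ → Bool` (i.e. an element of `{0,1}^ℕ`). -/
abbrev Hyp := ℕ → Bool

/-- A sample is a finite sequence of labeled examples. -/
abbrev Sample := List (ℕ × Bool)

/-- A learner maps samples to hypotheses. -/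
abbrev Learner := Sample → Hyp

/-- Generalization error `L_D(h) = Pr_{(x,y)∼D}[h(x) ≠ y]`. -/
noncomputable def genError (D : PMF (ℕ × Bool)) (h : Hyp) : ℝ≥0∞ :=
  D.toOuterMeasure {p | h p.1 ≠ p.2}

/-- The distribution of `m` i.i.d. draws from `D`, as a PMF on samples of size `m`. -/
noncomputable def iidPMF (D : PMF (ℕ × Bool)) : ℕ → PMF Sample
  | 0 => PMF.pure []
  | m + 1 => D.bind fun p => (iidPMF D m).map (List.cons p)

/-- `Pr_{S ∼ D^m}[S ∈ E]`. -/
noncomputable def samplePr (D : PMF (ℕ × Bool)) (m : ℕ) (E : Set Sample) : ℝ≥0∞ :=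
  (iidPMF D m).toOuterMeasure E

/-- The PAC inequality for accuracy/confidence parameter `n` and sample size `m`:
for every distribution `D`,
`Pr_{S∼D^m}[L_D(A(S)) ≤ inf_{h∈H} L_D(h) + 1/n] ≥ 1 − 1/n`. -/
def PACCondition (A : Learner) (H : Set Hyp) (n m : ℕ) : Prop :=
  ∀ D : PMF (ℕ × Bool),
    1 - ((n : ℝ≥0∞))⁻¹ ≤
      samplePr D m {S | genError D (A S) ≤ (⨅ h ∈ H, genError D h) + ((n : ℝ≥0∞))⁻¹}

/-- `A` PAC learns `H`. -/
def PACLearns (A : Learner) (H : Set Hyp) : Prop :=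
  ∀ n : ℕ, ∃ m₀ : ℕ, ∀ m ≥ m₀, PACCondition A H n m

/-- The sample complexity of `A` w.r.t. `H`: the minimal `m₀` such that the PAC
inequality for `n` holds for all `m ≥ m₀`. -/
noncomputable def sampleComplexity (A : Learner) (H : Set Hyp) (n : ℕ) : ℕ :=
  sInf {m₀ | ∀ m ≥ m₀, PACCondition A H n m}

/-- A learner is computable if the two-argument function `(S, x) ↦ A(S)(x)` is computable
(equivalently, there is an algorithm producing from `S` a Turing machine computing the
total function `A(S)`). -/
def ComputableLearner (A : Learner) : Prop :=
  Computable₂ fun (S : Sample) (x : ℕ) => A S x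

/-- A learner is proper for `H` if it only outputs hypotheses from `H`. -/
def ProperFor (A : Learner) (H : Set Hyp) : Prop := ∀ S, A S ∈ H

/-- `H` is CPAC learnable: some computable learner PAC learns it. -/
def CPACLearnable (H : Set Hyp) : Prop :=
  ∃ A : Learner, ComputableLearner A ∧ PACLearns A H

/-- `H` is properly CPAC learnable. -/
def ProperlyCPACLearnable (H : Set Hyp) : Prop :=
  ∃ A : Learner, ComputableLearner A ∧ ProperFor A H ∧ PACLearns A H

/-- `H` is SCPAC learnable: some computable learner PAC learns it with sample complexity
bounded by a total computable function. -/
def SCPACLearnable (H : Set Hyp) : Prop :=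
  ∃ A : Learner, ComputableLearner A ∧ PACLearns A H ∧
    ∃ g : ℕ → ℕ, Computable g ∧ ∀ n, sampleComplexity A H n ≤ g n

/-- `H` is properly SCPAC learnable. -/
def ProperlySCPACLearnable (H : Set Hyp) : Prop :=
  ∃ A : Learner, ComputableLearner A ∧ ProperFor A H ∧ PACLearns A H ∧
    ∃ g : ℕ → ℕ, Computable g ∧ ∀ n, sampleComplexity A H n ≤ g n

/-- Empirical error `L_S(h) = |{i : h(x_i) ≠ y_i}| / |S|`. -/
noncomputable def empError (S : Sample) (h : Hyp) : ℝ≥0∞ :=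
  ((S.countP fun p => h p.1 != p.2 : ℕ) : ℝ≥0∞) / (S.length : ℝ≥0∞)

/-- `A` is an ERM for `H`: on every sample it outputs a hypothesis of `H` minimizing
the empirical error over `H`. -/
def IsERM (A : Learner) (H : Set Hyp) : Prop :=
  ∀ S : Sample, A S ∈ H ∧ ∀ h ∈ H, empError S (A S) ≤ empError S h

/-- `A` is an asymptotic ERM for `H`. -/
def IsAsymptoticERM (A : Learner) (H : Set Hyp) : Prop :=
  ProperFor A H ∧
  ∃ ε : ℕ → ℝ≥0∞, (∀ m, ε m ≤ 1) ∧ Tendsto ε atTop (nhds 0) ∧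
    ∀ S : Sample, empError S (A S) ≤ (⨅ h ∈ H, empError S h) + ε S.length

/-- `H` shatters the finite set `s`. -/
def Shatters (H : Set Hyp) (s : Finset ℕ) : Prop :=
  ∀ g : ℕ → Bool, ∃ h ∈ H, ∀ x ∈ s, h x = g x

/-- The VC dimension of `H` is at most `d`. -/
def VCDimAtMost (H : Set Hyp) (d : ℕ) : Prop :=
  ∀ s : Finset ℕ, Shatters H s → s.card ≤ d

/-- `H` has finite VC dimension. -/
def FiniteVCDim (H : Set Hyp) : Prop := ∃ d, VCDimAtMost H d

/-- `w` is a `k`-witness of VC dimension for `H`: on every increasing `(k+1)`-tuple it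
produces a Boolean `(k+1)`-tuple which is not the trace of any `h ∈ H` on the tuple. -/
def IsKWitness (k : ℕ) (w : List ℕ → List Bool) (H : Set Hyp) : Prop :=
  ∀ xs : List ℕ, xs.length = k + 1 → xs.Chain' (· < ·) →
    (w xs).length = k + 1 ∧ ∀ h ∈ H, xs.map h ≠ w xs

/-- The support of a hypothesis: `h⁻¹(1)`. -/
def hypSupport (h : Hyp) : Set ℕ := {x | h x = true}

/-- `h` is finitely supported. -/
def FinitelySupported (h : Hyp) : Prop := (hypSupport h).Finite

/-- The finitely supported hypothesis with support (the set of elements of) `l`. -/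
def listIndicator (l : List ℕ) : Hyp := fun x => decide (x ∈ l)

/-- A class of finitely supported hypotheses is decidable: there is an algorithm that,
given the support of a finitely supported `h` (as a list), decides whether `h ∈ H`. -/
def DecidableClass (H : Set Hyp) : Prop :=
  ∃ d : List ℕ → Bool, Computable d ∧ ∀ l : List ℕ, (d l = true ↔ listIndicator l ∈ H)

/-- `H` shatters the full binary tree of depth `d` whose node at binary path `p`
(with `|p| < d`) is labeled `t p`: every leaf (a binary path of length `d`) is reached
by some `h ∈ H`, going right at a node labeled `x` iff `h x = 1`. -/
def ShattersTree (H : Set Hyp) (d : ℕ) (t : List Bool → ℕ) : Prop :=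
  ∀ l : List Bool, l.length = d →
    ∃ h ∈ H, ∀ (i : ℕ) (hi : i < l.length), l[i] = h (t (l.take i))

/-! ### The class `𝓗_f` -/

/-- The `j`-th smallest element of the `k`-th block `I_k` of positive even numbers
(`1 ≤ j ≤ k`): `n_{kj} = k(k-1) + 2j`. -/
def nkj (k j : ℕ) : ℕ := k * (k - 1) + 2 * j

/-- The block `I_k` (of size `k`). -/
def Iblk (k : ℕ) : Finset ℕ := (Finset.Icc 1 k).image (nkj k)

/-- `h_{kj}`: the indicator of `I_k \ {n_{kj}}`. -/
def hkj (k j : ℕ) : Hyp := fun n => decide (n ∈ Iblk k ∧ n ≠ nkj k j)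

/-- `h_a`: the indicator of `I_{f(a)} ∪ {2a+1}`. -/
def hA (f : ℕ → ℕ) (a : ℕ) : Hyp := fun n => decide (n ∈ Iblk (f a) ∨ n = 2 * a + 1)

/-- The class `𝓗_f = {h_{kj} : 1 ≤ j ≤ k} ∪ {h_a : a ∈ ℕ}`. -/
def Hf (f : ℕ → ℕ) : Set Hyp :=
  {h | ∃ k j, 1 ≤ j ∧ j ≤ k ∧ h = hkj k j} ∪ {h | ∃ a, h = hA f a}

/-! ### Good hypotheses w.r.t. a witness -/

/-- `h` is good w.r.t. the `k`-witness `w`: it has finite support and disagrees with `w`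
on every increasing `(k+1)`-tuple lying strictly below `max supp(h)`. -/
def IsGood (k : ℕ) (w : List ℕ → List Bool) (h : Hyp) : Prop :=
  FinitelySupported h ∧
  ∀ xs : List ℕ, xs.length = k + 1 → xs.Chain' (· < ·) →
    (∀ x ∈ xs, x < sSup (hypSupport h)) → xs.map h ≠ w xs

/-- The set of good hypotheses w.r.t. `w`. -/
def Hgood (k : ℕ) (w : List ℕ → List Bool) : Set Hyp := {h | IsGood k w h}

/-! ### Expectations over samples and symmetrisation -/

/-- Expectation of `f` over `m` i.i.d. draws from `D`, as an iterated sum. -/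
noncomputable def iidE (D : PMF (ℕ × Bool)) : ℕ → (Sample → ℝ≥0∞) → ℝ≥0∞
  | 0, f => f []
  | m + 1, f => ∑' p, D p * iidE D m fun S => f (p :: S)

theorem samplePr_eq_iidE (D : PMF (ℕ × Bool)) (m : ℕ) (E : Set Sample) :
    samplePr D m E = iidE D m (E.indicator 1) := by
  unfold samplePr
  induction m generalizing E with
  | zero =>
    classical
    simp [iidPMF, iidE, Set.indicator_apply]
  | succ m ih =>
    simp only [iidPMF, iidE, PMF.toOuterMeasure_bind_apply, PMF.toOuterMeasure_map_apply, ih]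
    rfl

theorem iidE_mono (D : PMF (ℕ × Bool)) {m : ℕ} {f g : Sample → ℝ≥0∞}
    (h : ∀ S, S.length = m → f S ≤ g S) : iidE D m f ≤ iidE D m g := by
  induction m generalizing f g with
  | zero => exact h [] rfl
  | succ m ih =>
    refine ENNReal.tsum_le_tsum fun p => ?_
    gcongr
    exact ih fun S hS => h _ (by simp [hS])

theorem iidE_add (D : PMF (ℕ × Bool)) (m : ℕ) (f g : Sample → ℝ≥0∞) :
    iidE D m (fun S => f S + g S) = iidE D m f + iidE D m g := by
  induction m generalizing f g with
  | zero => rfl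
  | succ m ih => simp only [iidE, ih, mul_add, ENNReal.tsum_add]

theorem iidE_tsum {ι : Type*} (D : PMF (ℕ × Bool)) (m : ℕ) (c : ι → ℝ≥0∞)
    (f : ι → Sample → ℝ≥0∞) :
    iidE D m (fun S => ∑' i, c i * f i S) = ∑' i, c i * iidE D m (f i) := by
  induction m generalizing f with
  | zero => rfl
  | succ m ih =>
    simp only [iidE, ih, ← ENNReal.tsum_mul_left]
    rw [ENNReal.tsum_comm]
    refine tsum_congr fun i => tsum_congr fun p => ?_
    ring

theorem iidE_const_mul (D : PMF (ℕ × Bool)) (m : ℕ) (c : ℝ≥0∞) (f : Sample → ℝ≥0∞) :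
    iidE D m (fun S => c * f S) = c * iidE D m f := by
  simpa using iidE_tsum D m (fun _ : Unit => c) (fun _ => f)

theorem iidE_const (D : PMF (ℕ × Bool)) (m : ℕ) (c : ℝ≥0∞) : iidE D m (fun _ => c) = c := by
  induction m with
  | zero => rfl
  | succ m ih => simp [iidE, ih, ENNReal.tsum_mul_right]

/-- Number of errors made by `h` on the sample `S`. -/
def errs (S : Sample) (h : Hyp) : ℕ := S.countP fun p => h p.1 != p.2

theorem genError_eq_tsum (D : PMF (ℕ × Bool)) (h : Hyp) :
    genError D h = ∑' p, D p * (if h p.1 != p.2 then 1 else 0) := by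
  classical
  rw [genError, PMF.toOuterMeasure_apply]
  refine tsum_congr fun p => ?_
  by_cases hp : h p.1 = p.2 <;> simp [hp]

theorem genError_le_one (D : PMF (ℕ × Bool)) (h : Hyp) : genError D h ≤ 1 := by
  rw [genError_eq_tsum, ← D.tsum_coe]
  refine ENNReal.tsum_le_tsum fun p => ?_
  split_ifs <;> simp

theorem iidE_errs (D : PMF (ℕ × Bool)) (m : ℕ) (h : Hyp) :
    iidE D m (fun S => (errs S h : ℝ≥0∞)) = m * genError D h := by
  induction m with
  | zero => simp [iidE, errs]
  | succ m ih =>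
    have key : ∀ p : ℕ × Bool, iidE D m (fun S => (errs (p :: S) h : ℝ≥0∞)) =
        m * genError D h + (if h p.1 != p.2 then 1 else 0) := by
      intro p
      have : (fun S => (errs (p :: S) h : ℝ≥0∞)) =
          fun S => (errs S h : ℝ≥0∞) + (if h p.1 != p.2 then 1 else 0) := by
        funext S
        simp only [errs, List.countP_cons]
        push_cast
        rfl
      rw [this, iidE_add, ih, iidE_const]
    simp only [iidE, key, mul_add, ENNReal.tsum_add, ENNReal.tsum_mul_right, D.tsum_coe,
      ← genError_eq_tsum]
    push_cast
    ring

/-- Expectation over `m` i.i.d. pairs, both components of each pair being independent draws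
from `D`. -/
noncomputable def pairE (D : PMF (ℕ × Bool)) :
    ℕ → (List ((ℕ × Bool) × (ℕ × Bool)) → ℝ≥0∞) → ℝ≥0∞
  | 0, f => f []
  | m + 1, f => ∑' a, D a * ∑' b, D b * pairE D m fun T => f ((a, b) :: T)

theorem iidE_iidE (D : PMF (ℕ × Bool)) (m : ℕ) (f : Sample → Sample → ℝ≥0∞) :
    iidE D m (fun S => iidE D m (f S)) =
      pairE D m fun T => f (T.map Prod.fst) (T.map Prod.snd) := by
  induction m generalizing f with
  | zero => rfl
  | succ m ih =>
    simp only [iidE, pairE, iidE_tsum, List.map_cons]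
    refine tsum_congr fun a => ?_
    congr 1
    refine tsum_congr fun b => ?_
    congr 1
    exact ih fun S S' => f (a :: S) (b :: S')

theorem pairE_mono (D : PMF (ℕ × Bool)) {m : ℕ}
    {f g : List ((ℕ × Bool) × (ℕ × Bool)) → ℝ≥0∞}
    (h : ∀ T, T.length = m → f T ≤ g T) : pairE D m f ≤ pairE D m g := by
  induction m generalizing f g with
  | zero => exact h [] rfl
  | succ m ih =>
    refine ENNReal.tsum_le_tsum fun a =>
      mul_le_mul_right (ENNReal.tsum_le_tsum fun b => mul_le_mul_right ?_ _) _
    exact ih fun S hS => h _ (by simp [hS])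

theorem pairE_add (D : PMF (ℕ × Bool)) (m : ℕ)
    (f g : List ((ℕ × Bool) × (ℕ × Bool)) → ℝ≥0∞) :
    pairE D m (fun S => f S + g S) = pairE D m f + pairE D m g := by
  induction m generalizing f g with
  | zero => rfl
  | succ m ih => simp only [pairE, ih, mul_add, ENNReal.tsum_add]

theorem pairE_const_mul (D : PMF (ℕ × Bool)) (m : ℕ) (c : ℝ≥0∞)
    (f : List ((ℕ × Bool) × (ℕ × Bool)) → ℝ≥0∞) :
    pairE D m (fun S => c * f S) = c * pairE D m f := by
  induction m generalizing f with
  | zero => rfl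
  | succ m ih =>
    simp only [pairE, ih, ← ENNReal.tsum_mul_left]
    refine tsum_congr fun a => tsum_congr fun b => ?_
    ring

theorem pairE_const (D : PMF (ℕ × Bool)) (m : ℕ) (c : ℝ≥0∞) : pairE D m (fun _ => c) = c := by
  induction m with
  | zero => rfl
  | succ m ih => simp [pairE, ih, ENNReal.tsum_mul_right]

/-- Average of `f` over the `2 ^ T.length` lists obtained from `T` by independently swapping or
keeping each of its pairs. -/
noncomputable def swapAvg {α : Type*} : (List (α × α) → ℝ≥0∞) → List (α × α) → ℝ≥0∞
  | f, [] => f []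
  | f, (a, b) :: T => swapAvg (fun T' => (f ((a, b) :: T') + f ((b, a) :: T')) / 2) T

/-- Ghost-sample symmetrisation: a pair and its swap have the same law, so averaging over swaps
does not change the expectation. -/
theorem pairE_swapAvg (D : PMF (ℕ × Bool)) (m : ℕ)
    (f : List ((ℕ × Bool) × (ℕ × Bool)) → ℝ≥0∞) :
    pairE D m (swapAvg f) = pairE D m f := by
  induction m generalizing f with
  | zero => rfl
  | succ m ih =>
    simp only [pairE, swapAvg]
    have h1 : ∀ a b : ℕ × Bool,
        pairE D m (fun T => swapAvg (fun T' => (f ((a, b) :: T') + f ((b, a) :: T')) / 2) T) =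
          2⁻¹ * (pairE D m (fun T => f ((a, b) :: T)) + pairE D m (fun T => f ((b, a) :: T))) := by
      intro a b
      rw [ih, ← pairE_add, ← pairE_const_mul]
      congr 1
      funext T
      rw [ENNReal.div_eq_inv_mul]
    simp only [h1]
    have h2 : ∑' a, D a * ∑' b, D b * pairE D m (fun T => f ((b, a) :: T)) =
        ∑' a, D a * ∑' b, D b * pairE D m (fun T => f ((a, b) :: T)) := by
      simp only [← ENNReal.tsum_mul_left]
      rw [ENNReal.tsum_comm]
      refine tsum_congr fun a => tsum_congr fun b => ?_
      ring
    simp only [ENNReal.tsum_add, mul_add]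
    have h4 : ∀ (x y : ℝ≥0∞), x * (2⁻¹ * y) = 2⁻¹ * (x * y) := by intros; ring
    simp only [h4, ENNReal.tsum_mul_left, h2]
    rw [← add_mul, ENNReal.inv_two_add_inv_two, one_mul]

/-- The finite set of domain points occurring in a list of pairs of examples. -/
def pts : List ((ℕ × Bool) × (ℕ × Bool)) → Finset ℕ
  | [] => ∅
  | (a, b) :: T => insert a.1 (insert b.1 (pts T))

theorem card_pts_le (T : List ((ℕ × Bool) × (ℕ × Bool))) : (pts T).card ≤ 2 * T.length := by
  induction T with
  | nil => simp [pts]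
  | cons p T ih =>
    obtain ⟨a, b⟩ := p
    have h1 := Finset.card_insert_le a.1 (insert b.1 (pts T))
    have h2 := Finset.card_insert_le b.1 (pts T)
    simp only [pts, List.length_cons]
    omega

/-- Monotonicity of the swap average; only lists with the same points as `T` matter, since a swap
does not change the set of points. -/
theorem swapAvg_mono {f g : List ((ℕ × Bool) × (ℕ × Bool)) → ℝ≥0∞}
    {T : List ((ℕ × Bool) × (ℕ × Bool))}
    (h : ∀ T', pts T' = pts T → f T' ≤ g T') : swapAvg f T ≤ swapAvg g T := by
  induction T generalizing f g with
  | nil => exact h [] rfl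
  | cons p T ih =>
    obtain ⟨a, b⟩ := p
    refine ih fun T' hT' => ?_
    gcongr
    · exact h _ (by simp [pts, hT'])
    · exact h _ (by simp [pts, hT', Finset.insert_comm])

theorem swapAvg_add {α : Type*} (f g : List (α × α) → ℝ≥0∞) (T : List (α × α)) :
    swapAvg (fun T => f T + g T) T = swapAvg f T + swapAvg g T := by
  induction T generalizing f g with
  | nil => rfl
  | cons p T ih =>
    simp only [swapAvg, ← ih]
    congr 1
    funext T'
    simp only [ENNReal.div_eq_inv_mul]
    ring

theorem swapAvg_const_mul {α : Type*} (c : ℝ≥0∞) (f : List (α × α) → ℝ≥0∞)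
    (T : List (α × α)) : swapAvg (fun T => c * f T) T = c * swapAvg f T := by
  induction T generalizing f with
  | nil => rfl
  | cons p T ih =>
    simp only [swapAvg, ← ih]
    congr 1
    funext T'
    simp only [ENNReal.div_eq_inv_mul]
    ring

theorem swapAvg_const {α : Type*} (c : ℝ≥0∞) (T : List (α × α)) :
    swapAvg (fun _ => c) T = c := by
  induction T with
  | nil => rfl
  | cons p T ih =>
    simp only [swapAvg]
    convert ih using 2
    funext T'
    rw [ENNReal.div_eq_inv_mul, mul_add, ← add_mul, ENNReal.inv_two_add_inv_two, one_mul]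

theorem swapAvg_sum {α ι : Type*} (s : Finset ι) (f : ι → List (α × α) → ℝ≥0∞)
    (T : List (α × α)) :
    swapAvg (fun T => ∑ i ∈ s, f i T) T = ∑ i ∈ s, swapAvg (f i) T := by
  classical
  induction s using Finset.induction_on with
  | empty => simpa using swapAvg_const 0 T
  | insert i s hi ih => simp only [Finset.sum_insert hi, swapAvg_add, ih]

/-- Difference between the numbers of errors of `h` on the second and on the first components
of `T`. -/
noncomputable def errDiff (h : Hyp) : List ((ℕ × Bool) × (ℕ × Bool)) → ℝ
  | [] => 0
  | (a, b) :: T => ((if h b.1 != b.2 then 1 else 0) - (if h a.1 != a.2 then 1 else 0)) + errDiff h T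

theorem errDiff_eq (h : Hyp) (T : List ((ℕ × Bool) × (ℕ × Bool))) :
    errDiff h T = (errs (T.map Prod.snd) h : ℝ) - errs (T.map Prod.fst) h := by
  induction T with
  | nil => simp [errDiff, errs]
  | cons p T ih =>
    obtain ⟨a, b⟩ := p
    simp only [errDiff, ih, errs, List.map_cons, List.countP_cons]
    push_cast
    ring

theorem errDiff_congr {h h' : Hyp} {T : List ((ℕ × Bool) × (ℕ × Bool))}
    (hh : ∀ x ∈ pts T, h x = h' x) : errDiff h T = errDiff h' T := by
  induction T with
  | nil => rfl
  | cons p T ih =>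
    obtain ⟨a, b⟩ := p
    simp only [errDiff]
    rw [ih fun x hx => hh x (by simp [pts, hx]), hh a.1 (by simp [pts]), hh b.1 (by simp [pts])]

theorem half_exp_add_exp_le {l v : ℝ} (hv : |v| ≤ 1) :
    (Real.exp (l * v) + Real.exp (l * -v)) / 2 ≤ Real.exp (l ^ 2 / 2) := by
  have h1 := Real.cosh_le_exp_half_sq (l * v)
  rw [Real.cosh_eq, ← mul_neg] at h1
  refine h1.trans (Real.exp_le_exp.2 ?_)
  have : v ^ 2 ≤ 1 := by rw [sq_le_one_iff_abs_le_one]; exact hv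
  nlinarith [sq_nonneg l]

/-- Hoeffding's bound on the moment generating function of a Rademacher sum. -/
theorem swapAvg_exp_le (h : Hyp) (l : ℝ) (T : List ((ℕ × Bool) × (ℕ × Bool))) :
    swapAvg (fun T => ENNReal.ofReal (Real.exp (l * errDiff h T))) T ≤
      ENNReal.ofReal (Real.exp (l ^ 2 / 2)) ^ T.length := by
  induction T with
  | nil => simp [swapAvg, errDiff]
  | cons p T ih =>
    obtain ⟨a, b⟩ := p
    obtain ⟨v, hv⟩ : ∃ v : ℝ,
      v = (if h b.1 != b.2 then 1 else 0) - (if h a.1 != a.2 then 1 else 0) := ⟨_, rfl⟩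
    have hv1 : |v| ≤ 1 := by
      rw [hv]; split_ifs <;> simp
    have e : (fun T' => (ENNReal.ofReal (Real.exp (l * errDiff h ((a, b) :: T'))) +
        ENNReal.ofReal (Real.exp (l * errDiff h ((b, a) :: T')))) / 2) =
        fun T' => ENNReal.ofReal ((Real.exp (l * v) + Real.exp (l * -v)) / 2) *
          ENNReal.ofReal (Real.exp (l * errDiff h T')) := by
      funext T'
      have e1 : errDiff h ((a, b) :: T') = v + errDiff h T' := by rw [hv]; rfl
      have e2 : errDiff h ((b, a) :: T') = -v + errDiff h T' := by
        rw [hv, neg_sub]; rfl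
      rw [e1, e2, mul_add, mul_add, Real.exp_add, Real.exp_add, ← ENNReal.ofReal_add (by positivity)
        (by positivity), ← ENNReal.ofReal_mul (by positivity)]
      rw [show (2 : ℝ≥0∞) = ENNReal.ofReal 2 by simp, ← ENNReal.ofReal_div_of_pos (by norm_num)]
      congr 1
      ring
    simp only [swapAvg, e]
    rw [swapAvg_const_mul, List.length_cons, pow_succ']
    gcongr
    exact half_exp_add_exp_le hv1

/-! ### Uniform convergence for classes of finite VC dimension -/

theorem sum_choose_le (N d : ℕ) : ∑ j ∈ Finset.range (d + 1), N.choose j ≤ (N + 1) ^ d := by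
  induction d with
  | zero => simp
  | succ d ih =>
    rw [Finset.sum_range_succ, pow_succ]
    have h1 := Nat.choose_le_pow N (d + 1)
    have h2 : N ^ d ≤ (N + 1) ^ d := Nat.pow_le_pow_left (by omega) d
    rw [pow_succ] at h1
    nlinarith [Nat.mul_le_mul_right N h2]

/-- Sauer–Shelah: on a finite set `X` a class of VC dimension at most `d` has at most
`(|X| + 1) ^ d` behaviours; the finset collects one hypothesis per behaviour. -/
theorem exists_representatives {Hh : Set Hyp} {d : ℕ} (hd : VCDimAtMost Hh d) (X : Finset ℕ) :
    ∃ R : Finset Hyp, R.card ≤ (X.card + 1) ^ d ∧ ∀ h ∈ Hh, ∃ r ∈ R, ∀ x ∈ X, h x = r x := by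
  classical
  let V : Finset (Finset ℕ) := X.powerset.filter fun s => ∃ h ∈ Hh, s = X.filter fun x => h x = true
  refine ⟨V.image fun s x => decide (x ∈ s), ?_, ?_⟩
  · refine Finset.card_image_le.trans (V.card_le_card_shatterer.trans ?_)
    have hsub : V.shatterer ⊆ (Finset.range (d + 1)).biUnion fun j => X.powersetCard j := by
      intro s hs
      rw [Finset.mem_shatterer] at hs
      have hsX : s ⊆ X := by
        obtain ⟨u, hu, hsu⟩ := hs.exists_superset
        exact hsu.trans (Finset.mem_powerset.1 (Finset.mem_filter.1 hu).1)
      have hcard : s.card ≤ d := by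
        refine hd s fun g => ?_
        obtain ⟨u, hu, hsu⟩ := hs (Finset.filter_subset (fun x => g x = true) s)
        obtain ⟨h, hh, rfl⟩ := (Finset.mem_filter.1 hu).2
        refine ⟨h, hh, fun x hx => ?_⟩
        have := Finset.ext_iff.1 hsu x
        simp only [Finset.mem_inter, Finset.mem_filter, hx, hsX hx, true_and] at this
        exact Bool.eq_iff_iff.2 this
      simp only [Finset.mem_biUnion, Finset.mem_range, Finset.mem_powersetCard]
      exact ⟨s.card, by omega, hsX, rfl⟩
    refine (Finset.card_le_card hsub).trans (Finset.card_biUnion_le.trans ?_)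
    simp only [Finset.card_powersetCard]
    exact sum_choose_le _ _
  · intro h hh
    refine ⟨_, Finset.mem_image_of_mem _ (Finset.mem_filter.2
      ⟨Finset.mem_powerset.2 (Finset.filter_subset (fun x => h x = true) X), h, hh, rfl⟩), ?_⟩
    intro x hx
    simp [hx]

/-- Massart's finite class lemma. The excess `Φ` dominates, simultaneously for all hypotheses of the
class, the number of errors on the ghost sample minus that on the sample, and its expectation is at
most `(c + 1) / l`, where `exp c` bounds the number of behaviours times the moment generating
function at `l` of a Rademacher sum. A dominating function is used instead of a supremum to avoid
truncated subtraction in `ℝ≥0∞`. -/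
theorem exists_excess {Hh : Set Hyp} {d : ℕ} (hd : VCDimAtMost Hh d) (m : ℕ) {l c : ℝ}
    (hl : 0 < l) (hc : 0 ≤ c)
    (hc' : ((2 * m + 1 : ℝ)) ^ d * Real.exp (l ^ 2 / 2) ^ m ≤ Real.exp c) :
    ∃ Φ : List ((ℕ × Bool) × (ℕ × Bool)) → ℝ≥0∞,
      (∀ T, ∀ h ∈ Hh, (errs (T.map Prod.snd) h : ℝ≥0∞) ≤ errs (T.map Prod.fst) h + Φ T) ∧
      ∀ D : PMF (ℕ × Bool), pairE D m Φ ≤ ENNReal.ofReal ((c + 1) / l) := by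
  choose R hRcard hR using exists_representatives hd
  let e : Hyp → List ((ℕ × Bool) × (ℕ × Bool)) → ℝ≥0∞ :=
    fun r T => ENNReal.ofReal (Real.exp (l * errDiff r T))
  let Φ : List ((ℕ × Bool) × (ℕ × Bool)) → ℝ≥0∞ := fun T =>
    ENNReal.ofReal (c / l) + ENNReal.ofReal (Real.exp (-c) / l) * ∑ r ∈ R (pts T), e r T
  refine ⟨Φ, ?_, ?_⟩
  · intro T h hh
    obtain ⟨r, hr, hrx⟩ := hR (pts T) h hh
    have h1 : e r T ≤ ∑ r ∈ R (pts T), e r T :=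
      Finset.single_le_sum (f := fun r => e r T) (fun _ _ => zero_le) hr
    have h2 : ENNReal.ofReal (c / l) + ENNReal.ofReal (Real.exp (-c) / l) * e r T ≤ Φ T := by
      simp only [Φ]; gcongr
    refine le_trans ?_ (add_le_add_right h2 _)
    simp only [e]
    rw [← errDiff_congr hrx, ← ENNReal.ofReal_mul (by positivity),
      ← ENNReal.ofReal_add (by positivity) (by positivity), ← ENNReal.ofReal_natCast,
      ← ENNReal.ofReal_natCast, ← ENNReal.ofReal_add (by positivity) (by positivity)]
    refine ENNReal.ofReal_le_ofReal ?_
    have h3 := errDiff_eq h T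
    -- `t ≤ exp (t - c) + c` applied to `t = l * errDiff h T`
    have h4 : l * errDiff h T ≤ c + Real.exp (-c) * Real.exp (l * errDiff h T) := by
      rw [← Real.exp_add]
      linarith [Real.add_one_le_exp (-c + l * errDiff h T)]
    have h5 : errDiff h T ≤ c / l + Real.exp (-c) / l * Real.exp (l * errDiff h T) := by
      have : errDiff h T ≤ (c + Real.exp (-c) * Real.exp (l * errDiff h T)) / l := by
        rw [le_div_iff₀ hl]; linarith
      calc _ ≤ _ := this
        _ = _ := by ring
    linarith
  · intro D
    rw [← pairE_swapAvg]
    refine le_trans (pairE_mono (g := fun _ => ENNReal.ofReal ((c + 1) / l)) D ?_)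
      (pairE_const D m _).le
    intro T hT
    let G : List ((ℕ × Bool) × (ℕ × Bool)) → ℝ≥0∞ := fun T' =>
      ENNReal.ofReal (c / l) + ENNReal.ofReal (Real.exp (-c) / l) * ∑ r ∈ R (pts T), e r T'
    have h1 : swapAvg Φ T ≤ swapAvg G T := swapAvg_mono fun T' hT' => by
      simp only [Φ, G, hT']; exact le_rfl
    refine h1.trans ?_
    simp only [G]
    rw [swapAvg_add, swapAvg_const, swapAvg_const_mul, swapAvg_sum]
    have h2 : ∑ r ∈ R (pts T), swapAvg (e r) T ≤ ENNReal.ofReal (Real.exp c) := by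
      calc ∑ r ∈ R (pts T), swapAvg (e r) T
          ≤ ∑ r ∈ R (pts T), ENNReal.ofReal (Real.exp (l ^ 2 / 2)) ^ m := by
            refine Finset.sum_le_sum fun r _ => ?_
            rw [← hT]; exact swapAvg_exp_le r l T
        _ = (R (pts T)).card * ENNReal.ofReal (Real.exp (l ^ 2 / 2)) ^ m := by simp
        _ = ENNReal.ofReal ((R (pts T)).card * Real.exp (l ^ 2 / 2) ^ m) := by
            rw [ENNReal.ofReal_mul (by positivity), ENNReal.ofReal_natCast,
              ENNReal.ofReal_pow (by positivity)]
        _ ≤ ENNReal.ofReal (Real.exp c) := by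
            refine ENNReal.ofReal_le_ofReal (le_trans ?_ hc')
            gcongr
            have h3 := hRcard (pts T)
            have h4 := card_pts_le T
            rw [hT] at h4
            have h5 : (R (pts T)).card ≤ (2 * m + 1) ^ d :=
              h3.trans (Nat.pow_le_pow_left (by omega) d)
            exact_mod_cast h5
    calc _ ≤ ENNReal.ofReal (c / l) + ENNReal.ofReal (Real.exp (-c) / l) *
          ENNReal.ofReal (Real.exp c) := by gcongr
      _ = ENNReal.ofReal ((c + 1) / l) := by
        rw [← ENNReal.ofReal_mul (by positivity), ← ENNReal.ofReal_add (by positivity)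
          (by positivity)]
        congr 1
        rw [Real.exp_neg]
        field_simp

/-- The numeric choice of parameters: `l = 1 / n ^ 2` and
`c = d * log (2 * m + 1) + m * l ^ 2 / 2`. -/
theorem sample_size_bound {n m d : ℕ} (hn : 1 ≤ n) (hm : 64 * n ^ 8 * (d + 1) ^ 2 ≤ m) :
    ∃ l c : ℝ, 0 < l ∧ 0 ≤ c ∧
      ((2 * m + 1 : ℝ)) ^ d * Real.exp (l ^ 2 / 2) ^ m ≤ Real.exp c ∧
      (c + 1) / l ≤ m * ((1 / n) * (1 / n)) := by
  have hn' : (1 : ℝ) ≤ n := by exact_mod_cast hn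
  have hm' : (64 * n ^ 8 * (d + 1) ^ 2 : ℝ) ≤ m := by exact_mod_cast hm
  have hm1 : (1 : ℝ) ≤ m := by
    have : 1 ≤ m := le_trans (Nat.succ_le_of_lt (by positivity)) hm
    exact_mod_cast this
  have hlog0 : 0 ≤ Real.log (2 * m + 1) := Real.log_nonneg (by linarith)
  refine ⟨1 / n ^ 2, d * Real.log (2 * m + 1) + m * ((1 / n ^ 2) ^ 2 / 2), by positivity,
    by positivity, ?_, ?_⟩
  · rw [Real.exp_add, Real.exp_nat_mul, Real.exp_nat_mul, Real.exp_log (by positivity)]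
  · obtain ⟨s, hs⟩ : ∃ s : ℝ, s = Real.sqrt m := ⟨_, rfl⟩
    have hs0 : 0 ≤ s := hs ▸ Real.sqrt_nonneg _
    have hss : s * s = m := by rw [hs]; exact Real.mul_self_sqrt (by linarith)
    have hs1 : 1 ≤ s := by nlinarith
    have hs8 : 8 * (n : ℝ) ^ 4 * (d + 1) ≤ s := by
      rw [hs]
      refine Real.le_sqrt_of_sq_le (le_trans (le_of_eq ?_) hm')
      ring
    have hlog : Real.log (2 * m + 1) ≤ 4 * s := by
      have h1 : (2 * m + 1 : ℝ) ≤ (2 * s) * (2 * s) := by nlinarith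
      have h2 : Real.log (2 * m + 1) ≤ Real.log ((2 * s) * (2 * s)) :=
        Real.log_le_log (by positivity) h1
      rw [Real.log_mul (by positivity) (by positivity)] at h2
      have h3 := Real.log_le_sub_one_of_pos (show 0 < 2 * s by positivity)
      linarith
    have hb : d * Real.log (2 * m + 1) + 1 ≤ 4 * (d + 1) * s := by
      have : (d : ℝ) * Real.log (2 * m + 1) ≤ d * (4 * s) := by gcongr
      nlinarith
    have hfin : 2 * (n : ℝ) ^ 4 * (d * Real.log (2 * m + 1) + 1) ≤ m := by
      calc 2 * (n : ℝ) ^ 4 * (d * Real.log (2 * m + 1) + 1)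
          ≤ 2 * (n : ℝ) ^ 4 * (4 * (d + 1) * s) := by gcongr
        _ = (8 * (n : ℝ) ^ 4 * (d + 1)) * s := by ring
        _ ≤ s * s := by gcongr
        _ = m := hss
    have e1 : (d * Real.log (2 * m + 1) + m * ((1 / (n : ℝ) ^ 2) ^ 2 / 2) + 1) / (1 / (n : ℝ) ^ 2) =
        (2 * (n : ℝ) ^ 4 * (d * Real.log (2 * m + 1) + 1) + m) / (2 * n ^ 2) := by
      field_simp
      ring
    rw [e1, div_le_iff₀ (by positivity)]
    calc _ ≤ (m + m : ℝ) := by linarith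
      _ = _ := by field_simp; ring

/-- Expected excess risk of empirical risk minimisation over a class of finite VC dimension. -/
theorem iidE_genError_erm_le {Hh : Set Hyp} {d : ℕ} (hd : VCDimAtMost Hh d) {A : Learner}
    (hA : ProperFor A Hh) (herm : ∀ S, ∀ h ∈ Hh, errs S (A S) ≤ errs S h) {n m : ℕ} (hn : 1 ≤ n)
    (hm : 64 * n ^ 8 * (d + 1) ^ 2 ≤ m) (D : PMF (ℕ × Bool)) :
    iidE D m (fun S => genError D (A S)) ≤
      (⨅ h ∈ Hh, genError D h) + (n : ℝ≥0∞)⁻¹ * (n : ℝ≥0∞)⁻¹ := by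
  obtain ⟨l, c, hl, hc, hc', hfin⟩ := sample_size_bound hn hm
  obtain ⟨Φ, hΦ, hΦE⟩ := exists_excess hd m hl hc hc'
  have hm0 : (m : ℝ≥0∞) ≠ 0 := by
    have : 1 ≤ m := le_trans (Nat.succ_le_of_lt (by positivity)) hm
    exact_mod_cast (by omega : m ≠ 0)
  have hB : ENNReal.ofReal ((c + 1) / l) ≤ m * ((n : ℝ≥0∞)⁻¹ * (n : ℝ≥0∞)⁻¹) := by
    refine (ENNReal.ofReal_le_ofReal hfin).trans (le_of_eq ?_)
    have hn0 : (0 : ℝ) < n := by exact_mod_cast hn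
    rw [ENNReal.ofReal_mul (by positivity), ENNReal.ofReal_mul (by positivity), one_div,
      ENNReal.ofReal_inv_of_pos hn0]
    simp
  have main : ∀ h ∈ Hh, iidE D m (fun S => genError D (A S)) ≤
      genError D h + (n : ℝ≥0∞)⁻¹ * (n : ℝ≥0∞)⁻¹ := by
    intro h hh
    refine (ENNReal.mul_le_mul_iff_right hm0 (ENNReal.natCast_ne_top m)).1 ?_
    calc (m : ℝ≥0∞) * iidE D m (fun S => genError D (A S))
        = iidE D m (fun S => iidE D m fun S' => (errs S' (A S) : ℝ≥0∞)) := by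
          simp only [iidE_errs, iidE_const_mul]
      _ = pairE D m (fun T => (errs (T.map Prod.snd) (A (T.map Prod.fst)) : ℝ≥0∞)) :=
          iidE_iidE D m fun S S' => (errs S' (A S) : ℝ≥0∞)
      _ ≤ pairE D m (fun T => (errs (T.map Prod.fst) (A (T.map Prod.fst)) : ℝ≥0∞) + Φ T) :=
          pairE_mono D fun T _ => hΦ T _ (hA _)
      _ ≤ pairE D m (fun T => (errs (T.map Prod.fst) h : ℝ≥0∞) + Φ T) :=
          pairE_mono D fun T _ => by
            gcongr
            exact herm _ _ hh
      _ = iidE D m (fun S => iidE D m fun _ => (errs S h : ℝ≥0∞)) + pairE D m Φ := by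
          rw [pairE_add, iidE_iidE D m fun S _ => (errs S h : ℝ≥0∞)]
      _ ≤ m * genError D h + m * ((n : ℝ≥0∞)⁻¹ * (n : ℝ≥0∞)⁻¹) := by
          simp only [iidE_const, iidE_errs]
          gcongr
          exact (hΦE D).trans hB
      _ = _ := by ring
  simp only [ENNReal.iInf_add]
  exact le_iInf₂ main

/-- Empirical risk minimisation over a class of VC dimension at most `d` satisfies the PAC
inequality as soon as the sample has size `64 * n ^ 8 * (d + 1) ^ 2`. -/
theorem pacCondition_of_erm {Hh : Set Hyp} {d : ℕ} (hd : VCDimAtMost Hh d) {A : Learner}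
    (hA : ProperFor A Hh) (herm : ∀ S, ∀ h ∈ Hh, errs S (A S) ≤ errs S h) {n m : ℕ}
    (hm : 64 * n ^ 8 * (d + 1) ^ 2 ≤ m) : PACCondition A Hh n m := by
  intro D
  rcases Nat.eq_zero_or_pos n with rfl | hn
  · simp
  have hE := iidE_genError_erm_le hd hA herm hn hm D
  obtain ⟨I, hI⟩ : ∃ I, I = ⨅ h ∈ Hh, genError D h := ⟨_, rfl⟩
  rw [← hI] at hE ⊢
  have hIle : ∀ S, I ≤ genError D (A S) := fun S => hI ▸ iInf₂_le _ (hA S)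
  have hItop : I ≠ ⊤ := ((hIle []).trans (genError_le_one D _)).trans_lt (by simp) |>.ne
  have hn0 : (n : ℝ≥0∞) ≠ 0 := by exact_mod_cast (by omega : n ≠ 0)
  set E : Set Sample := {S | genError D (A S) ≤ I + (n : ℝ≥0∞)⁻¹} with hEdef
  -- Markov's inequality for the excess risk, which is nonnegative because `A` is proper
  have hbad : iidE D m (Eᶜ.indicator 1) ≤ (n : ℝ≥0∞)⁻¹ := by
    have hX : iidE D m (fun S => genError D (A S) - I) ≤ (n : ℝ≥0∞)⁻¹ * (n : ℝ≥0∞)⁻¹ := by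
      refine (ENNReal.add_le_add_iff_left hItop).1 (le_trans (le_of_eq ?_) hE)
      conv_lhs => rw [← iidE_const D m I]
      rw [← iidE_add]
      congr 1
      funext S
      rw [iidE_const]
      exact add_tsub_cancel_of_le (hIle S)
    calc iidE D m (Eᶜ.indicator 1) ≤ iidE D m (fun S => n * (genError D (A S) - I)) := by
          refine iidE_mono D fun S _ => ?_
          by_cases hS : S ∈ E
          · simp [hS]
          · have h1 : I + (n : ℝ≥0∞)⁻¹ < genError D (A S) := not_le.1 hS
            have h2 : (n : ℝ≥0∞)⁻¹ ≤ genError D (A S) - I :=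
              ENNReal.le_sub_of_add_le_left hItop h1.le
            simp only [Set.mem_compl_iff, hS, not_false_eq_true, Set.indicator_of_mem,
              Pi.one_apply]
            rw [← ENNReal.mul_inv_cancel hn0 (ENNReal.natCast_ne_top n)]
            gcongr
      _ ≤ n * ((n : ℝ≥0∞)⁻¹ * (n : ℝ≥0∞)⁻¹) := by
          rw [iidE_const_mul]; gcongr
      _ = (n : ℝ≥0∞)⁻¹ := by
          rw [← mul_assoc, ENNReal.mul_inv_cancel hn0 (ENNReal.natCast_ne_top n), one_mul]
  rw [samplePr_eq_iidE, tsub_le_iff_right]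
  have htot : iidE D m (E.indicator 1) + iidE D m (Eᶜ.indicator 1) = 1 := by
    rw [← iidE_add, ← iidE_const D m 1]
    congr 1
    funext S
    by_cases hS : S ∈ E <;> simp [hS]
  rw [← htot]
  gcongr

/-! ### A computable empirical risk minimiser -/

theorem computable_decide_forall_lt {α : Type} [Primcodable α] {f : α → ℕ} {p : α → ℕ → Bool}
    (hf : Computable f) (hp : Computable₂ p) :
    Computable fun a => decide (∀ i < f a, p a i = true) := by
  have h : Computable fun a => Nat.rec (motive := fun _ => Bool) true
      (fun y IH => IH && p a y) (f a) :=
    Computable.nat_rec hf (Computable.const true)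
      ((Primrec.and.to_comp.comp (Computable.snd.comp Computable.snd)
        (hp.comp Computable.fst (Computable.fst.comp Computable.snd))).to₂)
  refine h.of_eq fun a => ?_
  generalize f a = N
  induction N with
  | zero => simp
  | succ N ih =>
    simp only [ih, Nat.lt_succ_iff_lt_or_eq, or_imp, forall_and, forall_eq, Bool.decide_and,
      Bool.decide_eq_true]

/-- Whether `p` holds for all increasing lists of length `j` with entries below `b`. The list is
built from its last, largest entry, which bounds the search for the remaining ones. -/
def allInc : ℕ → ℕ → (List ℕ → Bool) → Bool
  | 0, _, p => p []
  | j + 1, b, p => decide (∀ x < b, allInc j x (fun xs => p (xs ++ [x])) = true)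

theorem computable_allInc (j : ℕ) : ∀ {α : Type} [Primcodable α] {f : α → ℕ}
    {p : α → List ℕ → Bool}, Computable f → Computable₂ p →
    Computable fun a => allInc j (f a) (p a) := by
  induction j with
  | zero => intro α _ f p _ hp; exact hp.comp Computable.id (Computable.const [])
  | succ j ih =>
    intro α _ f p hf hp
    refine computable_decide_forall_lt hf (p := fun a x => allInc j x fun xs => p a (xs ++ [x])) ?_
    refine ih (α := α × ℕ) (f := Prod.snd) (p := fun a xs => p a.1 (xs ++ [a.2])) Computable.snd ?_
    exact (hp.comp (Computable.fst.comp Computable.fst)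
      (Computable.list_concat.comp Computable.snd (Computable.snd.comp Computable.fst))).to₂

theorem allInc_iff {j b : ℕ} {p : List ℕ → Bool} : allInc j b p = true ↔
    ∀ xs : List ℕ, xs.length = j → xs.IsChain (· < ·) → (∀ x ∈ xs, x < b) → p xs = true := by
  induction j generalizing b p with
  | zero =>
    constructor
    · rintro h xs hxs - -
      rw [List.length_eq_zero_iff.1 hxs]; exact h
    · intro h; exact h [] rfl List.isChain_nil (by simp)
  | succ j ih =>
    simp only [allInc, decide_eq_true_eq, ih, List.isChain_iff_pairwise]
    constructor
    · intro h xs hxs hc hb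
      rcases List.eq_nil_or_concat xs with rfl | ⟨ys, y, rfl⟩
      · simp at hxs
      · rw [List.concat_eq_append] at *
        rw [List.pairwise_append] at hc
        exact h y (hb y (by simp)) ys (by simpa using hxs) hc.1 fun x hx => hc.2.2 x hx y (by simp)
    · intro h x hx xs hxs hc hb
      refine h _ (by simp [hxs]) ?_ ?_
      · rw [List.pairwise_append]
        refine ⟨hc, by simp, ?_⟩
        intro a ha b hb'
        rw [List.mem_singleton.1 hb']
        exact hb a ha
      · intro a ha
        rcases List.mem_append.1 ha with ha | ha
        · exact (hb a ha).trans hx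
        · rw [List.mem_singleton.1 ha]; exact hx

theorem primrec_testBit : Primrec₂ Nat.testBit := by
  have hpow : Primrec₂ ((· ^ ·) : ℕ → ℕ → ℕ) := Primrec₂.unpaired'.1 Nat.Primrec.pow
  have : Primrec₂ fun n i : ℕ => decide (n / 2 ^ i % 2 = 1) :=
    (Primrec.eq.decide.comp (Primrec.nat_mod.comp (Primrec.nat_div.comp Primrec.fst
      (hpow.comp (Primrec.const 2) Primrec.snd)) (Primrec.const 2)) (Primrec.const 1)).to₂
  exact this.of_eq fun n i => by rw [Nat.testBit_eq_decide_div_mod_eq]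

/-- Hypotheses that disagree with `w` on every increasing `(k + 1)`-tuple lying strictly below
some point of their support. -/
def goodClass (k : ℕ) (w : List ℕ → List Bool) : Set Hyp :=
  {h | ∀ (xs : List ℕ) (y : ℕ), xs.length = k + 1 → xs.IsChain (· < ·) → (∀ x ∈ xs, x < y) →
    h y = true → xs.map h ≠ w xs}

/-- Decision procedure for membership in `goodClass k w` of the finitely supported hypothesis whose
support is given by the binary digits of `c`. -/
def goodCode (k : ℕ) (w : List ℕ → List Bool) (c : ℕ) : Bool :=
  decide (∀ y < c, (!(c.testBit y) ||
    allInc (k + 1) y fun xs => !(decide (xs.map c.testBit = w xs))) = true)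

theorem goodCode_iff {k : ℕ} {w : List ℕ → List Bool} {c : ℕ} :
    goodCode k w c = true ↔ c.testBit ∈ goodClass k w := by
  simp only [goodCode, goodClass, decide_eq_true_eq, Bool.or_eq_true, Bool.not_eq_true',
    allInc_iff, decide_eq_false_iff_not, Set.mem_ofPred_eq]
  constructor
  · intro h xs y h1 h2 h3 h4
    have hy : y < c := (Nat.lt_two_pow_self).trans_le (Nat.ge_two_pow_of_testBit h4)
    rcases h y hy with h5 | h5
    · rw [h4] at h5; cases h5
    · exact h5 xs h1 h2 h3
  · intro h y _
    cases hy : c.testBit y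
    · exact Or.inl rfl
    · exact Or.inr fun xs h1 h2 h3 => h xs y h1 h2 h3 hy

theorem computable_goodCode {k : ℕ} {w : List ℕ → List Bool} (hw : Computable w) :
    Computable (goodCode k w) := by
  refine computable_decide_forall_lt Computable.id (p := fun c y => (!(c.testBit y) ||
    allInc (k + 1) y fun xs => !(decide (xs.map c.testBit = w xs)))) ?_
  have hmap : Primrec fun q : (ℕ × ℕ) × List ℕ => q.2.map q.1.1.testBit :=
    Primrec.list_map Primrec.snd
      (primrec_testBit.comp (Primrec.fst.comp (Primrec.fst.comp Primrec.fst)) Primrec.snd).to₂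
  have hall : Computable fun q : ℕ × ℕ =>
      allInc (k + 1) q.2 fun xs => !(decide (xs.map q.1.testBit = w xs)) :=
    computable_allInc (k + 1) Computable.snd (Primrec.not.to_comp.comp
      (Primrec.eq.decide.to_comp.comp hmap.to_comp (hw.comp Computable.snd))).to₂
  exact (Primrec.or.to_comp.comp (Primrec.not.comp primrec_testBit).to_comp hall).to₂

theorem primrec_errs_testBit : Primrec₂ fun (S : Sample) (c : ℕ) => errs S c.testBit := by
  have hstep : Primrec₂ fun (a : Sample × ℕ) (q : (ℕ × Bool) × ℕ) =>
      cond (decide (a.2.testBit q.1.1 = q.1.2)) q.2 (q.2 + 1) :=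
    (Primrec.cond
      (Primrec.eq.decide.comp (primrec_testBit.comp (Primrec.snd.comp Primrec.fst)
        (Primrec.fst.comp (Primrec.fst.comp Primrec.snd)))
        (Primrec.snd.comp (Primrec.fst.comp Primrec.snd)))
      (Primrec.snd.comp Primrec.snd)
      (Primrec.succ.comp (Primrec.snd.comp Primrec.snd))).to₂
  have h := Primrec.list_foldr (α := Sample × ℕ) (f := fun a => a.1) (g := fun _ => 0)
    Primrec.fst (Primrec.const 0) hstep
  refine h.of_eq fun ⟨S, c⟩ => ?_
  simp only
  induction S with
  | nil => rfl
  | cons p S ih =>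
    simp only [List.foldr_cons, ih, errs, List.countP_cons]
    by_cases hp : c.testBit p.1 = p.2 <;> simp [hp]

/-- A strict upper bound on the domain points occurring in `S`. -/
def sampleBound (S : Sample) : ℕ := S.foldr (fun p n => p.1 + n + 1) 0

theorem lt_sampleBound {S : Sample} {p : ℕ × Bool} (hp : p ∈ S) : p.1 < sampleBound S := by
  induction S with
  | nil => simp at hp
  | cons q S ih =>
    simp only [sampleBound, List.foldr_cons] at ih ⊢
    rcases List.mem_cons.1 hp with rfl | hp
    · omega
    · have := ih hp; omega

theorem primrec_sampleBound : Primrec sampleBound :=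
  Primrec.list_foldr Primrec.id (Primrec.const 0)
    (Primrec.succ.comp (Primrec.nat_add.comp (Primrec.fst.comp (Primrec.fst.comp Primrec.snd))
      (Primrec.snd.comp Primrec.snd))).to₂

/-- The code of an empirical risk minimiser on `S` among the codes at most `N` accepted by
`goodCode k w`. -/
def bestCode (k : ℕ) (w : List ℕ → List Bool) (S : Sample) (N : ℕ) : ℕ :=
  Nat.rec (motive := fun _ => ℕ) 0
    (fun i b => cond (goodCode k w (i + 1) &&
      decide (errs S (i + 1).testBit < errs S b.testBit)) (i + 1) b) N

theorem bestCode_spec (k : ℕ) (w : List ℕ → List Bool) (S : Sample) (N : ℕ) :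
    goodCode k w (bestCode k w S N) = true ∧
    ∀ c ≤ N, goodCode k w c = true →
      errs S (bestCode k w S N).testBit ≤ errs S c.testBit := by
  induction N with
  | zero =>
    refine ⟨by simp [bestCode, goodCode], fun c hc _ => ?_⟩
    rw [Nat.le_zero.1 hc]; exact le_rfl
  | succ N ih =>
    have hstep : bestCode k w S (N + 1) = cond (goodCode k w (N + 1) &&
      decide (errs S (N + 1).testBit < errs S (bestCode k w S N).testBit)) (N + 1)
        (bestCode k w S N) := rfl
    cases hb : (goodCode k w (N + 1) &&
      decide (errs S (N + 1).testBit < errs S (bestCode k w S N).testBit))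
    · rw [hb] at hstep
      rw [hstep, cond_false]
      refine ⟨ih.1, fun c hc hg => ?_⟩
      rcases Nat.le_succ_iff.1 hc with hc | rfl
      · exact ih.2 c hc hg
      · rw [hg, Bool.true_and, decide_eq_false_iff_not] at hb
        exact not_lt.1 hb
    · rw [hb] at hstep
      rw [hstep, cond_true]
      rw [Bool.and_eq_true, decide_eq_true_eq] at hb
      refine ⟨hb.1, fun c hc hg => ?_⟩
      rcases Nat.le_succ_iff.1 hc with hc | rfl
      · exact hb.2.le.trans (ih.2 c hc hg)
      · exact le_rfl

/-- Empirical risk minimisation over `goodClass k w`: codes below `2 ^ sampleBound S` describe all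
behaviours on the points of `S`. -/
def ermLearner (k : ℕ) (w : List ℕ → List Bool) : Learner := fun S =>
  (bestCode k w S (2 ^ sampleBound S)).testBit

theorem computable_ermLearner {k : ℕ} {w : List ℕ → List Bool} (hw : Computable w) :
    ComputableLearner (ermLearner k w) := by
  have hpow : Primrec₂ ((· ^ ·) : ℕ → ℕ → ℕ) := Primrec₂.unpaired'.1 Nat.Primrec.pow
  have hN : Computable fun S : Sample => 2 ^ sampleBound S :=
    (hpow.comp (Primrec.const 2) primrec_sampleBound).to_comp
  have hi : Computable fun q : Sample × (ℕ × ℕ) => q.2.1 + 1 :=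
    Computable.succ.comp (Computable.fst.comp Computable.snd)
  have hb : Computable fun q : Sample × (ℕ × ℕ) => q.2.2 := Computable.snd.comp Computable.snd
  have herr := primrec_errs_testBit.to_comp
  have hlt : Computable₂ fun a b : ℕ => decide (a < b) := Primrec.nat_lt.decide.to_comp
  have hstep : Computable₂ fun (S : Sample) (q : ℕ × ℕ) => cond (goodCode k w (q.1 + 1) &&
      decide (errs S (q.1 + 1).testBit < errs S q.2.testBit)) (q.1 + 1) q.2 :=
    (Computable.cond (Primrec.and.to_comp.comp ((computable_goodCode hw).comp hi)
      (hlt.comp (herr.comp Computable.fst hi) (herr.comp Computable.fst hb))) hi hb).to₂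
  have hbest : Computable fun S : Sample => bestCode k w S (2 ^ sampleBound S) :=
    Computable.nat_rec hN (Computable.const 0) hstep
  exact (primrec_testBit.to_comp.comp (hbest.comp Computable.fst) Computable.snd).to₂

theorem properFor_ermLearner (k : ℕ) (w : List ℕ → List Bool) :
    ProperFor (ermLearner k w) (goodClass k w) := fun S =>
  goodCode_iff.1 (bestCode_spec k w S _).1

theorem errs_congr {S : Sample} {h h' : Hyp} (hh : ∀ p ∈ S, h p.1 = h' p.1) :
    errs S h = errs S h' := by
  refine List.countP_congr fun p hp => ?_
  rw [hh p hp]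

theorem ermLearner_le (k : ℕ) (w : List ℕ → List Bool) (S : Sample) (h : Hyp)
    (hh : h ∈ goodClass k w) : errs S (ermLearner k w S) ≤ errs S h := by
  -- `c` codes the truncation of `h` to `[0, sampleBound S)`, which is again good
  obtain ⟨c, hc⟩ : ∃ c, c = Nat.ofBits fun i : Fin (sampleBound S) => h i := ⟨_, rfl⟩
  have hlt : ∀ i < sampleBound S, c.testBit i = h i := fun i hi => by
    rw [hc, Nat.testBit_ofBits_lt _ _ hi]
  have hge : ∀ i, sampleBound S ≤ i → c.testBit i = false := fun i hi => by
    rw [hc, Nat.testBit_ofBits_ge _ _ hi]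
  have hgood : c.testBit ∈ goodClass k w := by
    intro xs y h1 h2 h3 h4
    have hy : y < sampleBound S := by
      by_contra hy
      rw [hge y (not_lt.1 hy)] at h4
      cases h4
    rw [hlt y hy] at h4
    rw [List.map_congr_left fun x hx => hlt x ((h3 x hx).trans hy)]
    exact hh xs y h1 h2 h3 h4
  have hcN : c ≤ 2 ^ sampleBound S := hc ▸ (Nat.ofBits_lt_two_pow _).le
  refine ((bestCode_spec k w S _).2 c hcN (goodCode_iff.2 hgood)).trans (le_of_eq ?_)
  exact errs_congr fun p hp => hlt _ (lt_sampleBound hp)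

theorem exists_map_eq_of_length : ∀ {xs : List ℕ} {bs : List Bool}, xs.Nodup →
    bs.length = xs.length → ∃ g : ℕ → Bool, xs.map g = bs
  | [], [], _, _ => ⟨fun _ => false, rfl⟩
  | x :: xs, b :: bs, hn, hl => by
    obtain ⟨g, hg⟩ := exists_map_eq_of_length (List.nodup_cons.1 hn).2 (by simpa using hl)
    refine ⟨Function.update g x b, ?_⟩
    rw [List.map_cons, Function.update_self, ← hg]
    congr 1
    refine List.map_congr_left fun y hy => Function.update_of_ne ?_ _ _
    rintro rfl
    exact (List.nodup_cons.1 hn).1 hy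

/-- On `k + 2` points, the labelling given by `w` on the first `k + 1` of them and by `true` on the
last one is not realised by a good hypothesis. -/
theorem vcDimAtMost_goodClass {k : ℕ} {w : List ℕ → List Bool}
    (hw : ∀ xs : List ℕ, xs.length = k + 1 → xs.IsChain (· < ·) → (w xs).length = k + 1) :
    VCDimAtMost (goodClass k w) (k + 1) := by
  intro s hs
  by_contra hcard
  obtain ⟨t, hts, ht⟩ := Finset.exists_subset_card_eq (show k + 2 ≤ s.card by omega)
  obtain ⟨xs, y, hxy⟩ : ∃ xs y, t.sort (· ≤ ·) = xs ++ [y] := by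
    rcases List.eq_nil_or_concat (t.sort (· ≤ ·)) with h0 | ⟨xs, y, h0⟩
    · have := Finset.length_sort (s := t) (· ≤ ·)
      rw [h0, ht] at this; simp at this
    · exact ⟨xs, y, by rw [h0, List.concat_eq_append]⟩
  have hlen : xs.length = k + 1 := by
    have := Finset.length_sort (s := t) (· ≤ ·)
    rw [hxy, ht] at this; simpa using this
  have hsort : (xs ++ [y]).Pairwise (· < ·) := by
    rw [← hxy]; exact (Finset.sortedLT_sort t).pairwise
  have hmem : ∀ x ∈ xs ++ [y], x ∈ s := fun x hx => hts (by
    rw [← hxy] at hx; exact (Finset.mem_sort _).1 hx)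
  rw [List.pairwise_append] at hsort
  have hchain : xs.IsChain (· < ·) := List.isChain_iff_pairwise.2 hsort.1
  have hlt : ∀ x ∈ xs, x < y := fun x hx => hsort.2.2 x hx y (by simp)
  obtain ⟨g, hg⟩ := exists_map_eq_of_length (hsort.1.imp ne_of_lt)
    ((hw xs hlen hchain).trans hlen.symm)
  obtain ⟨h, hh, hhx⟩ := hs (Function.update g y true)
  refine hh xs y hlen hchain hlt ?_ ?_
  · rw [hhx y (hmem y (by simp)), Function.update_self]
  · rw [← hg]
    refine List.map_congr_left fun x hx => ?_
    rw [hhx x (hmem x (by simp [hx])), Function.update_of_ne (hlt x hx).ne]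

/-- A computable witness for `H` makes `goodClass k w` a properly SCPAC learnable class containing
`H`, with sample complexity at most `64 * n ^ 8 * (k + 2) ^ 2`. -/
theorem exists_properSCPAC_of_witness {H : Set Hyp} {k : ℕ} {w : List ℕ → List Bool}
    (hc : Computable w) (hw : IsKWitness k w H) :
    ∃ Hhat : Set Hyp, H ⊆ Hhat ∧ ProperlySCPACLearnable Hhat := by
  have hd := vcDimAtMost_goodClass (k := k) (w := w) fun xs h1 h2 => (hw xs h1 h2).1
  have hpac : ∀ n, ∀ m ≥ 64 * n ^ 8 * (k + 1 + 1) ^ 2,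
      PACCondition (ermLearner k w) (goodClass k w) n m := fun n m hm =>
    pacCondition_of_erm hd (properFor_ermLearner k w) (ermLearner_le k w) hm
  have hpow : Primrec₂ ((· ^ ·) : ℕ → ℕ → ℕ) := Primrec₂.unpaired'.1 Nat.Primrec.pow
  refine ⟨goodClass k w, fun h hh xs y h1 h2 _ _ => (hw xs h1 h2).2 h hh, ermLearner k w,
    computable_ermLearner hc, properFor_ermLearner k w, fun n => ⟨_, hpac n⟩,
    fun n => 64 * n ^ 8 * (k + 1 + 1) ^ 2, ?_, fun n => Nat.sInf_le (hpac n)⟩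
  exact (Primrec.nat_mul.comp (Primrec.nat_mul.comp (Primrec.const 64)
    (hpow.comp Primrec.id (Primrec.const 8))) (Primrec.const _)).to_comp

/-! ### A computable no-free-lunch theorem -/

/-- Sum of `F` over all lists of length `m` with entries in `Fin N`. -/
def sumLists {N : ℕ} : ℕ → (List (Fin N) → ℕ) → ℕ
  | 0, F => F []
  | m + 1, F => ∑ i, sumLists m fun u => F (i :: u)

theorem sumLists_const_le {N m c : ℕ} {F : List (Fin N) → ℕ} (h : ∀ u, u.length = m → c ≤ F u) :
    N ^ m * c ≤ sumLists m F := by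
  induction m generalizing F with
  | zero => simpa [sumLists] using h [] rfl
  | succ m ih =>
    calc N ^ (m + 1) * c = ∑ _i : Fin N, N ^ m * c := by simp [pow_succ']; ring
      _ ≤ _ := Finset.sum_le_sum fun i _ => ih fun u hu => h _ (by simp [hu])

theorem sumLists_sum {N : ℕ} {ι : Type*} (s : Finset ι) (m : ℕ) (F : ι → List (Fin N) → ℕ) :
    ∑ g ∈ s, sumLists m (F g) = sumLists m fun u => ∑ g ∈ s, F g u := by
  induction m generalizing F with
  | zero => rfl
  | succ m ih =>
    simp only [sumLists]
    rw [Finset.sum_comm]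
    exact Finset.sum_congr rfl fun i _ => ih _

/-- The sample with positions `u` in the tuple `xs` labelled by `g`. -/
def labelled {N : ℕ} (xs : List ℕ) (g : Fin N → Bool) (u : List (Fin N)) : Sample :=
  u.map fun i : Fin N => (xs.getD i 0, g i)

/-- Total number of errors made by `A` on the points of `xs` labelled by `g`, over all samples of
size `m` drawn from them. Up to the factor `N ^ (m + 1)`, this is the expected generalization
error under the uniform distribution on the labelled points. -/
def totalErr (A : Learner) {N : ℕ} (m : ℕ) (xs : List ℕ) (g : Fin N → Bool) : ℕ :=
  sumLists m fun u => ∑ i : Fin N, (A (labelled xs g u) (xs.getD i 0) != g i).toNat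

/-- Flipping the label of an unseen point changes a correct prediction into an error. -/
theorem two_mul_sum_labelings (A : Learner) {N : ℕ} (xs : List ℕ) (u : List (Fin N)) (i : Fin N)
    (hi : i ∉ u) :
    2 * ∑ g : Fin N → Bool, (A (labelled xs g u) (xs.getD i 0) != g i).toNat = 2 ^ N := by
  let flip : (Fin N → Bool) → (Fin N → Bool) := fun g => Function.update g i (!(g i))
  have hflip : Function.Involutive flip := fun g => by simp [flip]
  have hsame : ∀ g, labelled xs (flip g) u = labelled xs g u := fun g =>
    List.map_congr_left fun j hj => by
      have : j ≠ i := fun h => hi (h ▸ hj)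
      simp [flip, this]
  have h1 : ∑ g : Fin N → Bool, (A (labelled xs g u) (xs.getD i 0) != g i).toNat =
      ∑ g : Fin N → Bool, (A (labelled xs g u) (xs.getD i 0) != !(g i)).toNat := by
    rw [← Equiv.sum_comp hflip.toPerm]
    refine Finset.sum_congr rfl fun g _ => ?_
    simp only [Function.Involutive.coe_toPerm, hsame]
    simp [flip]
  have h2 : ∀ a b : Bool, (a != b).toNat + (a != !b).toNat = 1 := by decide
  rw [two_mul]
  conv_lhs => rw [h1, add_comm, ← h1]
  nth_rewrite 2 [h1]
  rw [← Finset.sum_add_distrib]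
  simp only [h2]
  simp

/-- No free lunch: seeing `m` out of `2 * m` points, every learner errs a quarter of the time on
some labelling. -/
theorem exists_hard_labeling (A : Learner) {m : ℕ} (xs : List ℕ) :
    ∃ g : Fin (2 * m) → Bool, (2 * m) ^ (m + 1) ≤ 4 * totalErr A m xs g := by
  have hu : ∀ u : List (Fin (2 * m)), u.length = m →
      m * 2 ^ (2 * m) ≤ ∑ g : Fin (2 * m) → Bool,
        2 * ∑ i : Fin (2 * m), (A (labelled xs g u) (xs.getD i 0) != g i).toNat := by
    intro u hu
    have hcard : m ≤ (Finset.univ \ u.toFinset).card := by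
      have h1 := Finset.le_card_sdiff u.toFinset (Finset.univ : Finset (Fin (2 * m)))
      have h2 := u.toFinset_card_le
      rw [Finset.card_univ, Fintype.card_fin] at h1
      omega
    calc m * 2 ^ (2 * m) ≤ ∑ i ∈ Finset.univ \ u.toFinset, 2 ^ (2 * m) := by
          rw [Finset.sum_const, smul_eq_mul]; gcongr
      _ = ∑ i ∈ Finset.univ \ u.toFinset, 2 * ∑ g : Fin (2 * m) → Bool,
            (A (labelled xs g u) (xs.getD i 0) != g i).toNat := by
          refine Finset.sum_congr rfl fun i hi => (two_mul_sum_labelings A xs u i ?_).symm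
          simpa using hi
      _ ≤ ∑ i : Fin (2 * m), 2 * ∑ g : Fin (2 * m) → Bool,
            (A (labelled xs g u) (xs.getD i 0) != g i).toNat :=
          Finset.sum_le_sum_of_subset (Finset.subset_univ _)
      _ = _ := by
          simp only [Finset.mul_sum]
          rw [Finset.sum_comm]
  have hsum : ∑ _g : Fin (2 * m) → Bool, (2 * m) ^ (m + 1) ≤
      ∑ g : Fin (2 * m) → Bool, 4 * totalErr A m xs g := by
    have h1 := sumLists_const_le hu
    have h2 : ∀ g : Fin (2 * m) → Bool, 4 * totalErr A m xs g = 2 * sumLists m fun u =>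
        2 * ∑ i : Fin (2 * m), (A (labelled xs g u) (xs.getD i 0) != g i).toNat := by
      intro g
      have h3 := sumLists_sum (Finset.univ : Finset (Fin 2)) m fun _ (u : List (Fin (2 * m))) =>
        ∑ i : Fin (2 * m), (A (labelled xs g u) (xs.getD i 0) != g i).toNat
      simp only [Finset.sum_const, Finset.card_univ, Fintype.card_fin, smul_eq_mul] at h3
      rw [← h3, totalErr]; ring
    simp only [h2]
    rw [← Finset.mul_sum, sumLists_sum]
    refine le_trans (le_of_eq ?_) (Nat.mul_le_mul_left 2 h1)
    simp [pow_succ]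
    ring
  obtain ⟨g, -, hg⟩ := Finset.exists_le_of_sum_le Finset.univ_nonempty hsum
  exact ⟨g, hg⟩

/-- The uniform distribution on the points of `xs` labelled by `g`. -/
noncomputable def uniformOn {N : ℕ} [Nonempty (Fin N)] (xs : List ℕ) (g : Fin N → Bool) :
    PMF (ℕ × Bool) :=
  (PMF.uniformOfFintype (Fin N)).map fun i : Fin N => (xs.getD i 0, g i)

theorem tsum_uniformOn {N : ℕ} [Nonempty (Fin N)] (xs : List ℕ) (g : Fin N → Bool)
    (F : ℕ × Bool → ℝ≥0∞) :
    ∑' p, uniformOn xs g p * F p = (N : ℝ≥0∞)⁻¹ * ∑ i : Fin N, F (xs.getD i 0, g i) := by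
  classical
  simp only [uniformOn, PMF.map_apply, PMF.uniformOfFintype_apply, Fintype.card_fin,
    ← ENNReal.tsum_mul_right]
  rw [ENNReal.tsum_comm, tsum_fintype, Finset.mul_sum]
  refine Finset.sum_congr rfl fun i _ => ?_
  rw [tsum_eq_single (xs.getD i 0, g i)]
  · simp
  · intro p hp
    rw [if_neg hp, zero_mul]

theorem iidE_uniformOn {N : ℕ} [Nonempty (Fin N)] (xs : List ℕ) (g : Fin N → Bool) (m : ℕ)
    (F : Sample → ℕ) :
    iidE (uniformOn xs g) m (fun S => (F S : ℝ≥0∞)) =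
      ((N : ℝ≥0∞)⁻¹) ^ m * (sumLists m fun u : List (Fin N) => F (labelled xs g u) : ℕ) := by
  induction m generalizing F with
  | zero => simp [iidE, sumLists, labelled]
  | succ m ih =>
    simp only [iidE, ih fun S => F (_ :: S)]
    rw [tsum_uniformOn, ← Finset.mul_sum, ← mul_assoc, ← pow_succ', sumLists]
    push_cast
    rfl

theorem genError_uniformOn {N : ℕ} [Nonempty (Fin N)] (xs : List ℕ) (g : Fin N → Bool)
    (h : Hyp) : genError (uniformOn xs g) h =
      (N : ℝ≥0∞)⁻¹ * (∑ i : Fin N, (h (xs.getD i 0) != g i).toNat : ℕ) := by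
  rw [genError_eq_tsum, tsum_uniformOn]
  push_cast
  congr 1
  refine Finset.sum_congr rfl fun i _ => ?_
  cases (h (xs.getD i 0) != g i) <;> simp

/-- In the realisable case, a confidence and an accuracy of `1 / 9` bound the expected error by
`2 / 9`. -/
theorem iidE_genError_le_of_pac {A : Learner} {H : Set Hyp} {m : ℕ} (hA : PACCondition A H 9 m)
    (D : PMF (ℕ × Bool)) {h : Hyp} (hh : h ∈ H) (h0 : genError D h = 0) :
    iidE D m (fun S => genError D (A S)) ≤ 9⁻¹ + 9⁻¹ := by
  have hpac := hA D
  have hinf : (⨅ h ∈ H, genError D h) = 0 := by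
    refine le_antisymm ?_ zero_le
    rw [← h0]; exact iInf₂_le h hh
  rw [hinf, zero_add, samplePr_eq_iidE] at hpac
  set E : Set Sample := {S | genError D (A S) ≤ ((9 : ℕ) : ℝ≥0∞)⁻¹} with hE
  have htot : iidE D m (E.indicator 1) + iidE D m (Eᶜ.indicator 1) = 1 := by
    rw [← iidE_add, ← iidE_const D m 1]
    congr 1
    funext S
    by_cases hS : S ∈ E <;> simp [hS]
  have hfin : iidE D m (E.indicator 1) ≠ ⊤ := fun h => by rw [h] at htot; simp at htot
  have hbad : iidE D m (Eᶜ.indicator 1) ≤ 9⁻¹ := by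
    rw [tsub_le_iff_right, ← htot] at hpac
    simpa using (ENNReal.add_le_add_iff_left hfin).1 hpac
  calc iidE D m (fun S => genError D (A S)) ≤
        iidE D m (fun S => 9⁻¹ + Eᶜ.indicator 1 S) := by
        refine iidE_mono D fun S _ => ?_
        by_cases hS : S ∈ E
        · have h1 : genError D (A S) ≤ 9⁻¹ := by simpa [hE] using hS
          simpa [hS] using h1
        · refine (genError_le_one D _).trans ?_
          simp [hS]
    _ ≤ 9⁻¹ + 9⁻¹ := by
        rw [iidE_add, iidE_const]
        gcongr

/-- If the labelling `g` of `xs` is realised in `H`, a learner meeting the PAC inequality at accuracy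
`1 / 9` errs on average at most `2 / 9` of the time; this is below the `1 / 4` of
`exists_hard_labeling`. -/
theorem totalErr_le_of_pac {A : Learner} {H : Set Hyp} {m N : ℕ} (hN : 0 < N)
    (hA : PACCondition A H 9 m) {xs : List ℕ} {g : Fin N → Bool} {h : Hyp} (hh : h ∈ H)
    (hg : ∀ i : Fin N, h (xs.getD i 0) = g i) :
    9 * totalErr A m xs g ≤ 2 * N ^ (m + 1) := by
  have : Nonempty (Fin N) := ⟨⟨0, hN⟩⟩
  have h0 : genError (uniformOn xs g) h = 0 := by
    rw [genError_uniformOn]; simp only [hg]; simp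
  have h1 := iidE_genError_le_of_pac hA (uniformOn xs g) hh h0
  simp only [genError_uniformOn] at h1
  rw [iidE_const_mul, iidE_uniformOn, ← mul_assoc, ← pow_succ'] at h1
  change _ * ((totalErr A m xs g : ℕ) : ℝ≥0∞) ≤ _ at h1
  have hN0 : (N : ℝ≥0∞) ≠ 0 := by exact_mod_cast hN.ne'
  have hNN : (N : ℝ≥0∞) ^ (m + 1) * (N : ℝ≥0∞)⁻¹ ^ (m + 1) = 1 := by
    rw [← mul_pow, ENNReal.mul_inv_cancel hN0 (ENNReal.natCast_ne_top N), one_pow]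
  have h99 : (9 : ℝ≥0∞) * 9⁻¹ = 1 := ENNReal.mul_inv_cancel (by norm_num) (by norm_num)
  have h2 : (9 : ℝ≥0∞) * totalErr A m xs g ≤ 2 * (N : ℝ≥0∞) ^ (m + 1) := by
    calc (9 : ℝ≥0∞) * totalErr A m xs g
        = 9 * (((N : ℝ≥0∞) ^ (m + 1) * (N : ℝ≥0∞)⁻¹ ^ (m + 1)) * totalErr A m xs g) := by
          rw [hNN, one_mul]
      _ = 9 * ((N : ℝ≥0∞) ^ (m + 1) * ((N : ℝ≥0∞)⁻¹ ^ (m + 1) * totalErr A m xs g)) := by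
          rw [mul_assoc]
      _ ≤ 9 * ((N : ℝ≥0∞) ^ (m + 1) * (9⁻¹ + 9⁻¹)) := by gcongr
      _ = (9 * 9⁻¹ + 9 * 9⁻¹) * (N : ℝ≥0∞) ^ (m + 1) := by ring
      _ = 2 * (N : ℝ≥0∞) ^ (m + 1) := by rw [h99, one_add_one_eq_two]
  exact_mod_cast h2

theorem computable_finset_sum {α ι : Type} [Primcodable α] (s : Finset ι) {f : ι → α → ℕ}
    (hf : ∀ i, Computable (f i)) : Computable fun a => ∑ i ∈ s, f i a := by
  classical
  induction s using Finset.induction_on with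
  | empty => simpa using Computable.const 0
  | insert i s hi ih =>
    simp only [Finset.sum_insert hi]
    exact Primrec.nat_add.to_comp.comp (hf i) ih

theorem computable_sumLists {α : Type} [Primcodable α] {N : ℕ} (m : ℕ)
    {F : α → List (Fin N) → ℕ} (hF : ∀ u, Computable fun a => F a u) :
    Computable fun a => sumLists m (F a) := by
  induction m generalizing F with
  | zero => exact hF []
  | succ m ih => exact computable_finset_sum _ fun i => ih fun u => hF (i :: u)

theorem computable_totalErr {A : Learner} (hA : ComputableLearner A) {N : ℕ} (m : ℕ)
    (g : Fin N → Bool) : Computable fun xs => totalErr A m xs g := by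
  have hget : ∀ i : Fin N, Computable fun xs : List ℕ => xs.getD i 0 := fun i =>
    ((Primrec.list_getD 0).comp Primrec.id (Primrec.const (i : ℕ))).to_comp
  have hlab : ∀ u : List (Fin N), Computable fun xs => labelled xs g u := by
    intro u
    induction u with
    | nil => exact Computable.const []
    | cons i u ih =>
      exact Computable.list_cons.comp ((hget i).pair (Computable.const (g i))) ih
  refine computable_sumLists m fun u => computable_finset_sum _ fun i => ?_
  have hA' : Computable fun xs => A (labelled xs g u) (xs.getD i 0) :=
    Computable₂.comp hA (hlab u) (hget i)
  have hb : Primrec fun b : Bool => (b != g i).toNat := Primrec.dom_finite _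
  exact hb.to_comp.comp hA'

/-- The first labelling in `L` on which `A` errs at least a quarter of the time. -/
def pickHard (A : Learner) {N : ℕ} (m : ℕ) (xs : List ℕ) : List (Fin N → Bool) → List Bool
  | [] => []
  | g :: L => cond (decide (N ^ (m + 1) ≤ 4 * totalErr A m xs g)) (List.ofFn g) (pickHard A m xs L)

theorem computable_pickHard {A : Learner} (hA : ComputableLearner A) {N : ℕ} (m : ℕ)
    (L : List (Fin N → Bool)) : Computable fun xs => pickHard A m xs L := by
  induction L with
  | nil => exact Computable.const []
  | cons g L ih =>
    have hmul : Computable fun xs => 4 * totalErr A m xs g :=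
      Primrec.nat_mul.to_comp.comp (Computable.const 4) (computable_totalErr hA m g)
    have hle : Computable₂ fun a b : ℕ => decide (a ≤ b) := Primrec.nat_le.decide.to_comp
    exact Computable.cond (hle.comp (Computable.const _) hmul) (Computable.const _) ih

theorem pickHard_spec (A : Learner) {N : ℕ} (m : ℕ) (xs : List ℕ) (L : List (Fin N → Bool))
    (hL : ∃ g ∈ L, N ^ (m + 1) ≤ 4 * totalErr A m xs g) :
    ∃ g : Fin N → Bool, N ^ (m + 1) ≤ 4 * totalErr A m xs g ∧ pickHard A m xs L = List.ofFn g := by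
  induction L with
  | nil => simp at hL
  | cons g L ih =>
    by_cases hg : N ^ (m + 1) ≤ 4 * totalErr A m xs g
    · exact ⟨g, hg, by simp [pickHard, hg]⟩
    · obtain ⟨g', hg', hp⟩ := hL
      rcases List.mem_cons.1 hg' with rfl | hg'
      · exact absurd hp hg
      · obtain ⟨g'', h1, h2⟩ := ih ⟨g', hg', hp⟩
        exact ⟨g'', h1, by simp [pickHard, hg, h2]⟩

/-- A computable learner yields a computable witness: at its sample size `m` for accuracy `1 / 9`, the
labelling of `2 * m` points on which it errs a quarter of the time cannot come from `H`. -/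
theorem exists_witness_of_CPAC {H : Set Hyp} (hH : CPACLearnable H) :
    ∃ k : ℕ, ∃ w : List ℕ → List Bool, Computable w ∧ IsKWitness k w H := by
  obtain ⟨A, hA, hpac⟩ := hH
  obtain ⟨m₀, hm₀⟩ := hpac 9
  obtain ⟨m, hm⟩ : ∃ m, m = m₀ + 1 := ⟨_, rfl⟩
  have hAm : PACCondition A H 9 m := hm₀ m (by omega)
  refine ⟨2 * m - 1, fun xs => pickHard A m xs (Finset.univ : Finset (Fin (2 * m) → Bool)).toList,
    computable_pickHard hA m _, fun xs hlen _ => ?_⟩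
  have hlen' : xs.length = 2 * m := by omega
  obtain ⟨g₀, hg₀⟩ := exists_hard_labeling A (m := m) xs
  obtain ⟨g, hg, hw⟩ := pickHard_spec A m xs (Finset.univ : Finset (Fin (2 * m) → Bool)).toList
    ⟨g₀, by simp, hg₀⟩
  simp only [hw]
  refine ⟨by rw [List.length_ofFn]; omega, fun h hh heq => ?_⟩
  have hgi : ∀ i : Fin (2 * m), h (xs.getD i 0) = g i := by
    intro i
    have hi : (i : ℕ) < xs.length := by rw [hlen']; exact i.2
    have h1 := congrArg (fun l : List Bool => l[(i : ℕ)]?) heq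
    simpa [hi] using h1
  have hle := totalErr_le_of_pac (by omega) hAm hh hgi
  have hpos : 0 < (2 * m) ^ (m + 1) := by
    have : 0 < 2 * m := by omega
    positivity
  omega

/-- Learnability passes to subclasses for improper learners, since shrinking the class only
increases the best error it achieves. -/
theorem CPAC_of_subset {H Hhat : Set Hyp} (hsub : H ⊆ Hhat) (hH : ProperlySCPACLearnable Hhat) :
    CPACLearnable H := by
  obtain ⟨A, hA, -, hpac, -⟩ := hH
  refine ⟨A, hA, fun n => ?_⟩
  obtain ⟨m₀, hm₀⟩ := hpac n
  refine ⟨m₀, fun m hm D => (hm₀ m hm D).trans ?_⟩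
  rw [samplePr_eq_iidE, samplePr_eq_iidE]
  refine iidE_mono D fun S _ => Set.indicator_le_indicator_of_subset ?_ (fun _ => zero_le) S
  intro S hS
  change genError D (A S) ≤ _ at hS
  change genError D (A S) ≤ _
  refine hS.trans ?_
  gcongr ?_ + _
  exact biInf_mono hsub

/-- For every hypothesis class `H ⊆ {0,1}^ℕ`, the following are
equivalent: (a) the effective VC dimension of `H` is finite (i.e. `H` admits a
computable `k`-witness of VC dimension for some `k`); (b) `H` is CPAC learnable;
(c) `H` is contained in some properly SCPAC learnable class. -/
theorem effectiveVC_iff_CPAC_iff_subset_properSCPAC (H : Set Hyp) :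
    ((∃ k : ℕ, ∃ w : List ℕ → List Bool, Computable w ∧ IsKWitness k w H) ↔
      CPACLearnable H) ∧
    (CPACLearnable H ↔ ∃ Hhat : Set Hyp, H ⊆ Hhat ∧ ProperlySCPACLearnable Hhat) := by
  refine ⟨⟨?_, exists_witness_of_CPAC⟩, ?_, ?_⟩
  · rintro ⟨k, w, hc, hw⟩
    obtain ⟨Hhat, hsub, hH⟩ := exists_properSCPAC_of_witness hc hw
    exact CPAC_of_subset hsub hH
  · intro h
    obtain ⟨k, w, hc, hw⟩ := exists_witness_of_CPAC h
    exact exists_properSCPAC_of_witness hc hw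
  · rintro ⟨Hhat, hsub, hH⟩
    exact CPAC_of_subset hsub hH
end

section
/- A hypothesis class 𝓗 ⊆ {0,1}^ℕ is CPAC learnable if and only if it is SCPAC learnable. -/
/-!
Only the passage from CPAC to SCPAC needs an argument. Let `A` be a computable PAC learner for `H`.
Its sample complexity need not be computable, but a single number `m`, a sample size at which `A`
reaches accuracy and confidence `1 / 6`, can be hard-coded into an algorithm, and boosting turns
this one guarantee into a learner with an explicit (primitive recursive) sample complexity bound.

Fix `D` and a competitor `hs ∈ H` of nearly minimal error. On the part of `D` where `hs` is correct
the problem is realizable, so a multiplicative-weights scheme applies: examples are reweighted by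
`2` after an error and by `1 / 2` after a success, and as long as each new hypothesis has small
reweighted error, the total weight decreases geometrically; it dominates the mass of the examples
that `hs` classifies correctly and the majority vote misclassifies. The learner does not know `hs`
and so cannot sample from the reweighted distributions. However, these have bounded density with
respect to `D`, so blocks drawn from `D` itself behave as required with a positive probability that
has an explicit lower bound in terms of `m` and the number of rounds `r` (`round`, `rounds`,
`good_candidate`). Taking sufficiently many independent candidates makes it likely that one of them
is good (`ex_blocks`), and a validation sample selects one that is nearly as good
(`second_moment`, `deviates_le`, `select_good`). The parameter `r` is the largest one that the
sample size affords, so that the resulting learner works for every accuracy (`learner_pac`).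
-/

open Filter
open scoped ENNReal

namespace AgnBoost

/-! ### The learner -/

/-- `chunk m S j` is the `j`-th block of length `m` of the sample `S`. -/
def chunk (m : ℕ) (S : Sample) (j : ℕ) : Sample := (S.drop (j * m)).take m

/-- The number of `i < n` with `f i = true`. -/
def count (f : ℕ → Bool) (n : ℕ) : ℕ := ∑ i ∈ Finset.range n, (f i).toNat

/-- Strict majority vote of the `r` hypotheses that `A` outputs on the first `r` blocks of length
`m` of `S`. -/
def maj (A : Learner) (m r : ℕ) (S : Sample) : Hyp := fun x =>
  decide (r < 2 * count (fun j => A (chunk m S j) x) r)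

/-- The `i`-th candidate: the majority vote trained on the `i`-th block of length `r * m`. -/
def cand (A : Learner) (m r : ℕ) (S : Sample) (i : ℕ) : Hyp :=
  maj A m r (chunk (r * m) S i)

/-- Whether `h` errs on the `j`-th example of `v`; `false` if there is no such example. -/
def wrongAt (h : Hyp) (v : Sample) (j : ℕ) : Bool :=
  (v[j]?.map fun p => h p.1 != p.2).getD false

/-- The number of examples of `v` on which `h` errs. -/
def errs (h : Hyp) (v : Sample) : ℕ := count (wrongAt h v) v.length

/-- A minimizer of `f` over `{0, …, n - 1}` (and `0` if `n = 0`). -/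
def argmin (f : ℕ → ℕ) (n : ℕ) : ℕ :=
  Nat.rec 0 (fun k b => if f k < f b then k else b) n

/-- The number of candidates: `r` times an upper bound for the reciprocal of the probability that
a single candidate is good. -/
def numCand (m r : ℕ) : ℕ := (2 * ((2 ^ r + 1) * r ^ 4) ^ m) ^ r * r

/-- The size of the validation sample. -/
def numVal (m r : ℕ) : ℕ := numCand m r * r ^ 3

/-- The total sample size used with parameter `r`. -/
def total (m r : ℕ) : ℕ := numCand m r * (r * m) + numVal m r

/-- The learner with parameter `r`: among the first `numCand m r` candidates it selects one with
the fewest errors on the remaining part of the sample. -/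
def stage (A : Learner) (m r : ℕ) (S : Sample) : Hyp :=
  cand A m r S (argmin
    (fun i => errs (cand A m r S i) (S.drop (numCand m r * (r * m)))) (numCand m r))

/-- The largest parameter that a sample of size `N` affords. -/
def param (m N : ℕ) : ℕ := N.findGreatest fun r => total m r ≤ N

/-- The strong learner: `stage` with the largest affordable parameter, run on a prefix of the
sample of exactly the required size. -/
def learner (A : Learner) (m : ℕ) : Learner := fun S =>
  stage A m (param m S.length) (S.take (total m (param m S.length)))

/-! ### Computability of the learner -/

section Comp
variable {α : Type*} [Primcodable α]

theorem count_comp {f : α → ℕ → Bool} {n : α → ℕ} (hf : Computable₂ f) (hn : Computable n) :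
    Computable fun a => count (f a) (n a) := by
  have hg : Computable₂ fun (a : α) (q : ℕ × ℕ) => q.2 + (f a q.1).toNat := by
    have h1 : Computable fun p : α × ℕ × ℕ => f p.1 p.2.1 :=
      hf.comp .fst (Computable.fst.comp .snd)
    have h2 : Primrec Bool.toNat := Primrec.dom_finite _
    exact Primrec.nat_add.to_comp.comp (Computable.snd.comp .snd) (h2.to_comp.comp h1)
  refine (Computable.nat_rec hn (Computable.const 0) hg).of_eq fun a => ?_
  unfold count
  induction n a with
  | zero => rfl
  | succ k ih => rw [Finset.sum_range_succ, ← ih]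

theorem argmin_comp {f : α → ℕ → ℕ} {n : α → ℕ} (hf : Computable₂ f) (hn : Computable n) :
    Computable fun a => argmin (f a) (n a) := by
  have hg : Computable₂ fun (a : α) (q : ℕ × ℕ) =>
      bif decide (f a q.1 < f a q.2) then q.1 else q.2 := by
    have h1 : Computable fun p : α × ℕ × ℕ => f p.1 p.2.1 :=
      hf.comp .fst (Computable.fst.comp .snd)
    have h2 : Computable fun p : α × ℕ × ℕ => f p.1 p.2.2 :=
      hf.comp .fst (Computable.snd.comp .snd)
    exact Computable.cond (Primrec.nat_lt.decide.to_comp.comp h1 h2)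
      (Computable.fst.comp .snd) (Computable.snd.comp .snd)
  refine (Computable.nat_rec hn (Computable.const 0) hg).of_eq fun a => ?_
  unfold argmin
  simp only [Bool.cond_decide]

theorem pow_prim : Primrec₂ ((· ^ ·) : ℕ → ℕ → ℕ) :=
  Primrec₂.unpaired'.1 Nat.Primrec.pow

theorem numCand_prim (m : ℕ) : Primrec (numCand m) := by
  unfold numCand
  have h1 : Primrec fun r : ℕ => 2 ^ r + 1 :=
    Primrec.nat_add.comp (pow_prim.comp (.const 2) .id) (.const 1)
  have h2 : Primrec fun r : ℕ => r ^ 4 := pow_prim.comp .id (.const 4)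
  have h3 := pow_prim.comp (Primrec.nat_mul.comp h1 h2) (.const m)
  exact Primrec.nat_mul.comp (pow_prim.comp (Primrec.nat_mul.comp (.const 2) h3) .id) .id

theorem offset_prim (m : ℕ) : Primrec fun r => numCand m r * (r * m) :=
  Primrec.nat_mul.comp (numCand_prim m) (Primrec.nat_mul.comp .id (.const m))

theorem total_prim (m : ℕ) : Primrec (total m) :=
  Primrec.nat_add.comp (offset_prim m)
    (Primrec.nat_mul.comp (numCand_prim m) (pow_prim.comp .id (.const 3)))

theorem param_prim (m : ℕ) : Primrec (param m) := by
  have h : PrimrecRel fun N r : ℕ => total m r ≤ N :=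
    Primrec.nat_le.comp ((total_prim m).comp .snd) .fst
  exact Primrec.nat_findGreatest .id h

theorem chunk_comp {m j : α → ℕ} {S : α → Sample} (hm : Computable m) (hS : Computable S)
    (hj : Computable j) : Computable fun a => chunk (m a) (S a) (j a) :=
  Primrec.list_take.to_comp.comp hm
    (Primrec.list_drop.to_comp.comp (Primrec.nat_mul.to_comp.comp hj hm) hS)

theorem maj_comp {A : Learner} (hA : ComputableLearner A) (m : ℕ) {r x : α → ℕ} {S : α → Sample}
    (hr : Computable r) (hS : Computable S) (hx : Computable x) :
    Computable fun a => maj A m (r a) (S a) (x a) := by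
  have h1 : Computable₂ fun (a : α) (j : ℕ) => A (chunk m (S a) j) (x a) :=
    Computable₂.comp hA
      (chunk_comp (α := α × ℕ) (.const m) (hS.comp .fst) .snd) (hx.comp .fst)
  exact Primrec.nat_lt.decide.to_comp.comp hr
    (Primrec.nat_mul.to_comp.comp (.const 2) (count_comp h1 hr))

theorem cand_comp {A : Learner} (hA : ComputableLearner A) (m : ℕ) {r i x : α → ℕ}
    {S : α → Sample} (hr : Computable r) (hS : Computable S) (hi : Computable i)
    (hx : Computable x) : Computable fun a => cand A m (r a) (S a) (i a) (x a) :=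
  maj_comp hA m hr (chunk_comp (Primrec.nat_mul.to_comp.comp hr (.const m)) hS hi) hx

theorem errs_comp {h : α → Hyp} {v : α → Sample} (hh : Computable₂ h) (hv : Computable v) :
    Computable fun a => errs (h a) (v a) := by
  refine count_comp (f := fun a => wrongAt (h a) (v a)) ?_ (Computable.list_length.comp hv)
  have h1 : Computable fun p : α × ℕ => (v p.1)[p.2]? :=
    Computable.list_getElem?.comp (hv.comp .fst) .snd
  have h2 : Computable₂ fun (p : α × ℕ) (q : ℕ × Bool) => (h p.1 q.1 != q.2) := by
    have hb : Primrec₂ (fun a b : Bool => (a != b)) := Primrec.dom_finite _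
    exact hb.to_comp.comp
      (hh.comp (Computable.fst.comp .fst) (Computable.fst.comp .snd)) (Computable.snd.comp .snd)
  exact Computable.option_getD (Computable.option_map h1 h2) (.const false)

theorem stage_comp {A : Learner} (hA : ComputableLearner A) (m : ℕ) {r x : α → ℕ}
    {S : α → Sample} (hr : Computable r) (hS : Computable S) (hx : Computable x) :
    Computable fun a => stage A m (r a) (S a) (x a) := by
  refine cand_comp hA m hr hS (argmin_comp (f := fun a i => errs (cand A m (r a) (S a) i)
    ((S a).drop (numCand m (r a) * (r a * m)))) ?_ ((numCand_prim m).to_comp.comp hr)) hx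
  refine errs_comp (α := α × ℕ) (h := fun p => cand A m (r p.1) (S p.1) p.2) ?_
    (Primrec.list_drop.to_comp.comp ((offset_prim m).to_comp.comp (hr.comp .fst))
      (hS.comp .fst))
  exact cand_comp (α := (α × ℕ) × ℕ) hA m (hr.comp (Computable.fst.comp .fst))
    (hS.comp (Computable.fst.comp .fst)) (Computable.snd.comp .fst) .snd

end Comp

theorem learner_computable {A : Learner} (hA : ComputableLearner A) (m : ℕ) :
    ComputableLearner (learner A m) := by
  have hr : Computable fun p : Sample × ℕ => param m p.1.length :=
    (param_prim m).to_comp.comp (Computable.list_length.comp .fst)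
  exact stage_comp (α := Sample × ℕ) hA m hr
    (Primrec.list_take.to_comp.comp ((total_prim m).to_comp.comp hr) .fst) .snd

/-! ### Expectations over i.i.d. samples -/

/-- The expectation of `f` over `m` i.i.d. draws from `D`. -/
noncomputable def ex (D : PMF (ℕ × Bool)) (m : ℕ) (f : Sample → ℝ≥0∞) : ℝ≥0∞ :=
  ∑' S, iidPMF D m S * f S

/-- The indicator of a proposition. -/
noncomputable def ind (P : Prop) : ℝ≥0∞ := by
  classical exact if P then 1 else 0

theorem ind_true {P : Prop} (h : P) : ind P = 1 := by simp [ind, h]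
theorem ind_false {P : Prop} (h : ¬P) : ind P = 0 := by simp [ind, h]

theorem ind_add_not (P : Prop) : ind P + ind (¬P) = 1 := by
  by_cases h : P <;> simp [ind, h]

theorem ind_le_one (P : Prop) : ind P ≤ 1 := ind_add_not P ▸ le_self_add

theorem samplePr_eq (D : PMF (ℕ × Bool)) (m : ℕ) (E : Set Sample) :
    samplePr D m E = ex D m fun S => ind (S ∈ E) := by
  rw [samplePr, PMF.toOuterMeasure_apply, ex]
  refine tsum_congr fun S => ?_
  by_cases h : S ∈ E <;> simp [ind, h]

theorem genError_eq (D : PMF (ℕ × Bool)) (h : Hyp) :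
    genError D h = ∑' p, D p * ind (h p.1 ≠ p.2) := by
  rw [genError, PMF.toOuterMeasure_apply]
  refine tsum_congr fun p => ?_
  by_cases hp : h p.1 = p.2 <;> simp [ind, hp]

theorem tsum_bind_mul {α β : Type*} (P : PMF α) (k : α → PMF β) (f : β → ℝ≥0∞) :
    ∑' b, (P.bind k) b * f b = ∑' a, P a * ∑' b, k a b * f b := by
  simp_rw [PMF.bind_apply, ← ENNReal.tsum_mul_right, ← ENNReal.tsum_mul_left]
  rw [ENNReal.tsum_comm]
  simp_rw [mul_assoc]

theorem tsum_pure_mul {α : Type*} (a : α) (f : α → ℝ≥0∞) :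
    ∑' b, (PMF.pure a) b * f b = f a := by
  rw [tsum_eq_single a]
  · simp
  · intro b hb
    simp [hb]

theorem tsum_map_mul {α β : Type*} (P : PMF α) (g : α → β) (f : β → ℝ≥0∞) :
    ∑' b, (P.map g) b * f b = ∑' a, P a * f (g a) := by
  rw [PMF.map, tsum_bind_mul]
  simp only [Function.comp, tsum_pure_mul]

theorem ex_zero (D : PMF (ℕ × Bool)) (f : Sample → ℝ≥0∞) : ex D 0 f = f [] := by
  rw [ex, iidPMF, tsum_pure_mul]

theorem ex_succ (D : PMF (ℕ × Bool)) (m : ℕ) (f : Sample → ℝ≥0∞) :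
    ex D (m + 1) f = ∑' p, D p * ex D m fun S => f (p :: S) := by
  simp only [ex, iidPMF, tsum_bind_mul, tsum_map_mul]

theorem ex_append (D : PMF (ℕ × Bool)) (a b : ℕ) (f : Sample → ℝ≥0∞) :
    ex D (a + b) f = ex D a fun s => ex D b fun s' => f (s ++ s') := by
  induction a generalizing f with
  | zero => simp [ex_zero]
  | succ a ih =>
    rw [Nat.succ_add, ex_succ, ex_succ]
    simp only [ih, List.cons_append]

/-- Monotonicity; only samples of the right length matter. -/
theorem ex_mono {D : PMF (ℕ × Bool)} {m : ℕ} {f g : Sample → ℝ≥0∞}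
    (h : ∀ S : Sample, S.length = m → f S ≤ g S) : ex D m f ≤ ex D m g := by
  induction m generalizing f g with
  | zero => simpa [ex_zero] using h [] rfl
  | succ m ih =>
    rw [ex_succ, ex_succ]
    exact ENNReal.tsum_le_tsum fun p =>
      mul_le_mul_right (ih fun S hS => h (p :: S) (by simp [hS])) _

theorem ex_congr {D : PMF (ℕ × Bool)} {m : ℕ} {f g : Sample → ℝ≥0∞}
    (h : ∀ S : Sample, S.length = m → f S = g S) : ex D m f = ex D m g :=
  le_antisymm (ex_mono fun S hS => (h S hS).le) (ex_mono fun S hS => (h S hS).ge)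

theorem ex_const (D : PMF (ℕ × Bool)) (m : ℕ) (c : ℝ≥0∞) : ex D m (fun _ => c) = c := by
  rw [ex, ENNReal.tsum_mul_right, PMF.tsum_coe, one_mul]

theorem ex_mul_left (D : PMF (ℕ × Bool)) (m : ℕ) (c : ℝ≥0∞) (f : Sample → ℝ≥0∞) :
    ex D m (fun S => c * f S) = c * ex D m f := by
  rw [ex, ex, ← ENNReal.tsum_mul_left]
  exact tsum_congr fun S => by ring

theorem ex_mul_right (D : PMF (ℕ × Bool)) (m : ℕ) (c : ℝ≥0∞) (f : Sample → ℝ≥0∞) :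
    ex D m (fun S => f S * c) = ex D m f * c := by
  simp_rw [mul_comm _ c, ex_mul_left]

theorem ex_add (D : PMF (ℕ × Bool)) (m : ℕ) (f g : Sample → ℝ≥0∞) :
    ex D m (fun S => f S + g S) = ex D m f + ex D m g := by
  simp only [ex, mul_add, ENNReal.tsum_add]

theorem ex_sum (D : PMF (ℕ × Bool)) (m n : ℕ) (f : ℕ → Sample → ℝ≥0∞) :
    ex D m (fun S => ∑ i ∈ Finset.range n, f i S) = ∑ i ∈ Finset.range n, ex D m (f i) := by
  induction n with
  | zero => simp [ex]
  | succ n ih => simp only [Finset.sum_range_succ, ex_add, ih]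

/-- Only a prefix of length `a` of the sample is inspected. -/
theorem ex_take (D : PMF (ℕ × Bool)) {a m : ℕ} (h : a ≤ m) (f : Sample → ℝ≥0∞) :
    ex D m (fun S => f (S.take a)) = ex D a f := by
  obtain ⟨b, rfl⟩ := Nat.exists_eq_add_of_le h
  rw [ex_append]
  refine ex_congr fun S hS => ?_
  simp only [← hS, List.take_left, ex_const]

/-- A pointwise domination `D₁ ≤ C • D₂` costs a factor `C ^ m` on samples of size `m`. -/
theorem ex_le_of_dom {D₁ D₂ : PMF (ℕ × Bool)} {C : ℝ≥0∞} (h : ∀ p, D₁ p ≤ C * D₂ p) (m : ℕ)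
    (f : Sample → ℝ≥0∞) : ex D₁ m f ≤ C ^ m * ex D₂ m f := by
  induction m generalizing f with
  | zero => simp [ex_zero]
  | succ m ih =>
    rw [ex_succ, ex_succ, ← ENNReal.tsum_mul_left]
    refine ENNReal.tsum_le_tsum fun p => (mul_le_mul' (h p) (ih _)).trans (le_of_eq ?_)
    ring

theorem ex_ind_not {D : PMF (ℕ × Bool)} {m : ℕ} {P : Sample → Prop} {δ : ℝ≥0∞}
    (h : ex D m (fun S => ind (¬P S)) ≤ δ) : 1 - δ ≤ ex D m fun S => ind (P S) := by
  rw [tsub_le_iff_right, ← ex_const D m 1]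
  calc ex D m (fun _ => 1) = ex D m (fun S => ind (P S) + ind (¬P S)) := by
        simp only [ind_add_not]
    _ ≤ _ := by rw [ex_add]; gcongr

theorem chunk_zero_append {m : ℕ} {s : Sample} (hs : s.length = m) (s' : Sample) :
    chunk m (s ++ s') 0 = s := by
  simp [chunk, ← hs]

theorem chunk_succ_append {m : ℕ} {s : Sample} (hs : s.length = m) (s' : Sample) (j : ℕ) :
    chunk m (s ++ s') (j + 1) = chunk m s' j := by
  simp only [chunk, ← hs, Nat.succ_mul]
  rw [Nat.add_comm, ← List.drop_drop, List.drop_left]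

/-- The failure probability of independent repetitions: if a block of length `L` satisfies `G`
with probability at least `q`, then `K` consecutive blocks all violate `G` with probability at most
`(1 - q) ^ K`. -/
theorem ex_blocks {D : PMF (ℕ × Bool)} {L : ℕ} {G : Sample → Prop} {q : ℝ≥0∞}
    (hq : q ≤ ex D L fun S => ind (G S)) (K : ℕ) :
    ex D (K * L) (fun S => ind (∀ i < K, ¬G (chunk L S i))) ≤ (1 - q) ^ K := by
  induction K with
  | zero => simp [ex_zero, ind]
  | succ K ih =>
    rw [Nat.succ_mul, Nat.add_comm, ex_append]
    have h1 : ex D L (fun S => ind (¬G S)) ≤ 1 - q := by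
      have hs : ex D L (fun S => ind (G S)) + ex D L (fun S => ind (¬G S)) = 1 := by
        rw [← ex_add]; simp only [ind_add_not, ex_const]
      have hfin : ex D L (fun S => ind (G S)) ≠ ⊤ :=
        ne_top_of_le_ne_top ENNReal.one_ne_top (hs ▸ le_self_add)
      rw [← hs]
      refine ENNReal.le_sub_of_add_le_left (ne_top_of_le_ne_top hfin hq) ?_
      gcongr
    rw [pow_succ']
    calc _ ≤ ex D L (fun s => ind (¬G s) * (1 - q) ^ K) := by
          refine ex_mono fun s hs => ?_
          by_cases hG : G s
          · rw [ind_false (not_not.2 hG), zero_mul]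
            refine le_of_eq ((ex_congr fun s' _ => ind_false ?_).trans (ex_const D _ 0))
            intro h
            exact h 0 K.succ_pos (by rwa [chunk_zero_append hs])
          · rw [ind_true hG, one_mul]
            refine (ex_mono fun s' _ => ?_).trans ih
            by_cases h : ∀ i < K, ¬G (chunk L s' i)
            · rw [ind_true h]
              unfold ind
              split_ifs <;> simp
            · rw [ind_false h, ind_false]
              intro h'
              refine h fun i hi => ?_
              have := h' (i + 1) (by omega)
              rwa [chunk_succ_append hs] at this
      _ ≤ _ := by rw [ex_mul_right]; gcongr

/-! ### Boosting under the true distribution -/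

/-- The multiplicative update factor of the example `p` after a round with hypothesis `h`. -/
noncomputable def factor (h : Hyp) (p : ℕ × Bool) : ℝ≥0∞ :=
  if h p.1 = p.2 then 2⁻¹ else 2

/-- The potential of the weight function `u`: the `u`-weighted `D`-mass of the examples on which
`hs` is correct. -/
noncomputable def mass (D : PMF (ℕ × Bool)) (hs : Hyp) (u : ℕ × Bool → ℝ≥0∞) : ℝ≥0∞ :=
  ∑' p, D p * (ind (hs p.1 = p.2) * u p)

theorem genError_add_mass (D : PMF (ℕ × Bool)) (hs : Hyp) :
    mass D hs (fun _ => 1) + genError D hs = 1 := by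
  rw [genError_eq, mass, ← ENNReal.tsum_add]
  simp only [← mul_add, mul_one, ne_eq, ind_add_not, PMF.tsum_coe]

theorem genError_le_one (D : PMF (ℕ × Bool)) (h : Hyp) : genError D h ≤ 1 := by
  rw [← genError_add_mass D h]
  exact le_add_self

theorem mass_add (D : PMF (ℕ × Bool)) (hs : Hyp) (u v : ℕ × Bool → ℝ≥0∞) :
    mass D hs (fun p => u p + v p) = mass D hs u + mass D hs v := by
  simp only [mass, mul_add, ENNReal.tsum_add]

theorem mass_mul (D : PMF (ℕ × Bool)) (hs : Hyp) (c : ℝ≥0∞) (u : ℕ × Bool → ℝ≥0∞) :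
    mass D hs (fun p => c * u p) = c * mass D hs u := by
  rw [mass, mass, ← ENNReal.tsum_mul_left]
  exact tsum_congr fun p => by ring

theorem mass_mono {D : PMF (ℕ × Bool)} {hs : Hyp} {u v : ℕ × Bool → ℝ≥0∞}
    (h : ∀ p, u p ≤ v p) : mass D hs u ≤ mass D hs v :=
  ENNReal.tsum_le_tsum fun p => by gcongr; exact h p

/-- One round of boosting. The learner `A` is run on samples from `D` itself, but its guarantee is
used for the distribution with density proportional to `u + ε` on the set where `hs` is correct;
the summand `ε` keeps that density bounded, which bounds the price of the change of measure. -/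
theorem round {A : Learner} {H : Set Hyp} {m : ℕ} (hA : PACCondition A H 6 m)
    {D : PMF (ℕ × Bool)} {hs : Hyp} (hhs : hs ∈ H) {u : ℕ × Bool → ℝ≥0∞} {U ε : ℝ≥0∞}
    (hu : ∀ p, u p ≤ U) (hU : U ≠ ⊤) (h0 : ε ≠ 0) (h1 : ε ≤ 1)
    (hm : ε ≤ mass D hs (fun _ => 1)) :
    1 ≤ 2 * ((U + ε) / (ε * ε)) ^ m *
      ex D m (fun S => ind (4 * mass D hs (fun p => u p * factor (A S) p)
        ≤ 3 * mass D hs u + ε)) := by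
  have htop : ε ≠ ⊤ := ne_top_of_le_ne_top ENNReal.one_ne_top h1
  have hm1 : mass D hs (fun _ => 1) ≤ 1 :=
    le_self_add.trans (genError_add_mass D hs).le
  set W := mass D hs (fun p => u p + ε) with hW
  have hWe : W = mass D hs u + ε * mass D hs (fun _ => 1) := by
    rw [hW, mass_add, ← mass_mul]; simp only [mul_one]
  have hWε : ε * ε ≤ W := hWe ▸ (mul_le_mul_right hm ε).trans le_add_self
  have hWU : W ≤ U + ε := by
    calc W ≤ mass D hs (fun _ => (U + ε) * 1) :=
          mass_mono fun p => by rw [mul_one]; gcongr; exact hu p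
      _ = (U + ε) * mass D hs (fun _ => 1) := mass_mul _ _ _ _
      _ ≤ (U + ε) * 1 := by gcongr
      _ = _ := mul_one _
  have hW0 : W ≠ 0 := fun h => by
    rw [h] at hWε
    simp [h0] at hWε
  have hWt : W ≠ ⊤ := ne_top_of_le_ne_top (ENNReal.add_ne_top.2 ⟨hU, htop⟩) hWU
  set D₁ : PMF (ℕ × Bool) :=
    PMF.normalize (fun p => D p * (ind (hs p.1 = p.2) * (u p + ε))) hW0 hWt with hD₁
  have hD₁p : ∀ p, D₁ p = D p * (ind (hs p.1 = p.2) * (u p + ε)) * W⁻¹ := fun p =>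
    PMF.normalize_apply _ _ p
  have hdom : ∀ p, D₁ p ≤ (U + ε) / (ε * ε) * D p := fun p => by
    rw [hD₁p]
    calc D p * (ind (hs p.1 = p.2) * (u p + ε)) * W⁻¹
        ≤ D p * (1 * (U + ε)) * (ε * ε)⁻¹ := by
          gcongr
          · exact ind_le_one _
          · exact hu p
      _ = _ := by rw [div_eq_mul_inv]; ring
  have hreal : genError D₁ hs = 0 := by
    rw [genError_eq, ENNReal.tsum_eq_zero]
    intro p
    by_cases h : hs p.1 = p.2
    · rw [ind_false (not_not.2 h), mul_zero]
    · rw [hD₁p, ind_false h]; simp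
  have hpac := hA D₁
  rw [samplePr_eq] at hpac
  have hhalf : (1 : ℝ≥0∞) ≤ 2 * (1 - ((6 : ℕ) : ℝ≥0∞)⁻¹) := by
    have : (1 : ℝ≥0∞) - ((6 : ℕ) : ℝ≥0∞)⁻¹ = ENNReal.ofReal (1 - 6⁻¹) := by
      rw [ENNReal.ofReal_sub _ (by norm_num), ENNReal.ofReal_one,
        ENNReal.ofReal_inv_of_pos (by norm_num)]
      norm_num
    rw [this, ← ENNReal.ofReal_ofNat 2, ← ENNReal.ofReal_mul (by norm_num), ENNReal.one_le_ofReal]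
    norm_num
  refine hhalf.trans ?_
  rw [mul_assoc]
  refine mul_le_mul_right (hpac.trans ((ex_le_of_dom hdom m _).trans ?_)) 2
  gcongr
  refine ex_mono fun S _ => ?_
  by_cases hS : genError D₁ (A S) ≤ (⨅ h ∈ H, genError D₁ h) + ((6 : ℕ) : ℝ≥0∞)⁻¹
  swap
  · rw [ind_false (by simpa using hS)]; exact zero_le
  refine (ind_le_one _).trans (le_of_eq (ind_true ?_).symm)
  have hinf : (⨅ h ∈ H, genError D₁ h) = 0 :=
    le_antisymm (hreal ▸ iInf₂_le hs hhs) zero_le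
  rw [hinf, zero_add, genError_eq] at hS
  -- `X` is the weighted mass of the examples on which the new hypothesis errs.
  set X := mass D hs (fun p => u p * ind (A S p.1 ≠ p.2)) with hX
  have hXW : 6 * X ≤ W := by
    have : X * W⁻¹ ≤ ((6 : ℕ) : ℝ≥0∞)⁻¹ := by
      refine le_trans ?_ hS
      rw [hX, mass, ← ENNReal.tsum_mul_right]
      refine ENNReal.tsum_le_tsum fun p => ?_
      rw [hD₁p]
      calc _ = D p * (ind (hs p.1 = p.2) * u p) * W⁻¹ * ind (A S p.1 ≠ p.2) := by ring
        _ ≤ _ := by gcongr; exact le_self_add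
    rw [← div_eq_mul_inv, ENNReal.div_le_iff hW0 hWt] at this
    calc 6 * X ≤ 6 * (((6 : ℕ) : ℝ≥0∞)⁻¹ * W) := by gcongr
      _ = W := by
        rw [← mul_assoc, Nat.cast_ofNat, ENNReal.mul_inv_cancel (by norm_num) (by norm_num),
          one_mul]
  have hfac : ∀ p, 2 * factor (A S) p = 1 + 3 * ind (A S p.1 ≠ p.2) := fun p => by
    by_cases h : A S p.1 = p.2
    · rw [ind_false (not_not.2 h), factor, if_pos h,
        ENNReal.mul_inv_cancel (by norm_num) (by norm_num)]
      simp
    · rw [ind_true h, factor, if_neg h]; norm_num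
  have hZ : 2 * mass D hs (fun p => u p * factor (A S) p) = mass D hs u + 3 * X := by
    rw [hX, ← mass_mul, ← mass_mul, ← mass_add]
    congr 1
    funext p
    calc _ = u p * (2 * factor (A S) p) := by ring
      _ = _ := by rw [hfac]; ring
  calc 4 * mass D hs (fun p => u p * factor (A S) p)
      = 2 * (2 * mass D hs (fun p => u p * factor (A S) p)) := by ring
    _ = 2 * mass D hs u + 6 * X := by rw [hZ]; ring
    _ ≤ 2 * mass D hs u + (mass D hs u + ε * 1) := by
        gcongr
        exact hXW.trans (hWe ▸ by gcongr)
    _ = _ := by ring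

/-- Iterating `round`: `t` consecutive successful rounds shrink the potential by about
`(3 / 4) ^ t`, and the probability of success is bounded below by an explicit constant. -/
theorem rounds {A : Learner} {H : Set Hyp} {m : ℕ} (hA : PACCondition A H 6 m)
    {D : PMF (ℕ × Bool)} {hs : Hyp} (hhs : hs ∈ H) {ε : ℝ≥0∞} (h0 : ε ≠ 0) (h1 : ε ≤ 1)
    (hm : ε ≤ mass D hs (fun _ => 1)) (r t : ℕ) (u : ℕ × Bool → ℝ≥0∞)
    (hu : ∀ p, u p * 2 ^ t ≤ 2 ^ r) :
    1 ≤ (2 * ((2 ^ r + 1) / (ε * ε)) ^ m) ^ t *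
      ex D (t * m) (fun S => ind (
        4 ^ t * mass D hs (fun p => u p * ∏ j ∈ Finset.range t, factor (A (chunk m S j)) p)
          ≤ 3 ^ t * mass D hs u + t * 4 ^ t * ε)) := by
  induction t generalizing u with
  | zero => simp [ind_true, ex_zero]
  | succ t ih =>
    have hone : ∀ n : ℕ, (1 : ℝ≥0∞) ≤ 2 ^ n := fun n => one_le_pow₀ (by norm_num)
    have hr := round hA hhs (u := u) (U := 2 ^ r)
      (fun p => (le_mul_of_one_le_right zero_le (hone _)).trans (hu p)) (by simp) h0 h1 hm
    set B := 2 * ((2 ^ r + 1) / (ε * ε)) ^ m with hB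
    refine hr.trans ?_
    rw [Nat.succ_mul, Nat.add_comm (t * m), ex_append, pow_succ', mul_assoc B]
    refine mul_le_mul' ?_ ?_
    · rw [hB]; gcongr
    rw [← ex_mul_left]
    refine ex_mono fun s hslen => ?_
    by_cases hG : 4 * mass D hs (fun p => u p * factor (A s) p) ≤ 3 * mass D hs u + ε
    swap
    · rw [ind_false hG]; exact zero_le
    rw [ind_true hG]
    refine (ih (fun p => u p * factor (A s) p) fun p => ?_).trans ?_
    · have : factor (A s) p ≤ 2 := by
        unfold factor
        split_ifs
        · exact (ENNReal.inv_le_one.2 (by norm_num)).trans (by norm_num)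
        · exact le_rfl
      calc _ ≤ u p * 2 * 2 ^ t := by gcongr
        _ = u p * 2 ^ (t + 1) := by ring
        _ ≤ _ := hu p
    refine mul_le_mul_right (ex_mono fun s' _ => ?_) _
    by_cases hG' : 4 ^ t * mass D hs (fun p => u p * factor (A s) p *
        ∏ j ∈ Finset.range t, factor (A (chunk m s' j)) p)
          ≤ 3 ^ t * mass D hs (fun p => u p * factor (A s) p) + t * 4 ^ t * ε
    swap
    · rw [ind_false hG']; exact zero_le
    rw [ind_true hG', ind_true]
    have e : (fun p => u p * ∏ j ∈ Finset.range (t + 1), factor (A (chunk m (s ++ s') j)) p) =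
        fun p => u p * factor (A s) p * ∏ j ∈ Finset.range t, factor (A (chunk m s' j)) p := by
      funext p
      rw [Finset.prod_range_succ', chunk_zero_append hslen]
      simp only [chunk_succ_append hslen]
      ring
    rw [e]
    calc _ = 4 * (4 ^ t * mass D hs (fun p => u p * factor (A s) p *
            ∏ j ∈ Finset.range t, factor (A (chunk m s' j)) p)) := by ring
      _ ≤ 4 * (3 ^ t * mass D hs (fun p => u p * factor (A s) p) + t * 4 ^ t * ε) := by gcongr
      _ = 3 ^ t * (4 * mass D hs (fun p => u p * factor (A s) p)) + t * 4 ^ (t + 1) * ε := by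
          ring
      _ ≤ 3 ^ t * (3 * mass D hs u + ε) + t * 4 ^ (t + 1) * ε := by gcongr
      _ = 3 ^ (t + 1) * mass D hs u + (t * 4 ^ (t + 1) * ε + 3 ^ t * ε) := by ring
      _ ≤ 3 ^ (t + 1) * mass D hs u + (t * 4 ^ (t + 1) * ε + 4 ^ (t + 1) * ε) := by
          have h34 : (3 : ℝ≥0∞) ^ t ≤ 4 ^ (t + 1) :=
            (pow_le_pow_left₀ zero_le (by norm_num) t).trans
              (pow_le_pow_right₀ (by norm_num) (Nat.le_succ t))
          gcongr
      _ = _ := by push_cast; ring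

/-! ### Candidates are good with bounded-below probability -/

theorem count_add_not (f : ℕ → Bool) (n : ℕ) : count f n + count (fun i => !f i) n = n := by
  unfold count
  rw [← Finset.sum_add_distrib]
  have : ∀ i ∈ Finset.range n, (f i).toNat + (!f i).toNat = 1 := fun i _ => by
    cases f i <;> rfl
  rw [Finset.sum_congr rfl this]
  simp

theorem count_succ (f : ℕ → Bool) (n : ℕ) : count f (n + 1) = count f n + (f n).toNat :=
  Finset.sum_range_succ _ _

theorem prod_factor (h : ℕ → Hyp) (p : ℕ × Bool) (n : ℕ) :
    2 ^ n * ∏ j ∈ Finset.range n, factor (h j) p = 4 ^ count (fun j => h j p.1 != p.2) n := by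
  induction n with
  | zero => simp [count]
  | succ n ih =>
    rw [Finset.prod_range_succ, pow_succ, mul_mul_mul_comm, ih, count_succ, pow_add]
    congr 1
    by_cases hj : h n p.1 = p.2
    · rw [factor, if_pos hj, ENNReal.mul_inv_cancel (by norm_num) (by norm_num),
        bne_eq_false_iff_eq.2 hj, Bool.toNat_false, pow_zero]
    · rw [factor, if_neg hj, bne_iff_ne.2 hj, Bool.toNat_true]
      norm_num

/-- An example misclassified by the majority has final weight at least `1`. -/
theorem one_le_prod_of_maj {A : Learner} {m r : ℕ} {S : Sample} {p : ℕ × Bool}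
    (h : maj A m r S p.1 ≠ p.2) :
    1 ≤ ∏ j ∈ Finset.range r, factor (A (chunk m S j)) p := by
  have key : r ≤ 2 * count (fun j => A (chunk m S j) p.1 != p.2) r := by
    have hc := count_add_not (fun j => A (chunk m S j) p.1) r
    unfold maj at h
    cases hy : p.2
    · simp only [hy, ne_eq, decide_eq_false_iff_not, not_not] at h
      simpa using h.le
    · simp only [hy, ne_eq, decide_eq_true_eq, not_lt] at h
      simp only [Bool.bne_true]
      omega
  have h2 := prod_factor (fun j => A (chunk m S j)) p r
  have h3 : (2 : ℝ≥0∞) ^ r * 1 ≤ 2 ^ r * ∏ j ∈ Finset.range r, factor (A (chunk m S j)) p := by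
    rw [h2, mul_one, show (4 : ℝ≥0∞) = 2 ^ 2 by norm_num, ← pow_mul]
    exact pow_le_pow_right₀ (by norm_num) key
  exact (ENNReal.mul_le_mul_iff_right (by simp) (by simp)).1 h3

theorem genError_maj_le (D : PMF (ℕ × Bool)) (hs : Hyp) (A : Learner) (m r : ℕ) (S : Sample) :
    genError D (maj A m r S) ≤ genError D hs +
      mass D hs (fun p => ∏ j ∈ Finset.range r, factor (A (chunk m S j)) p) := by
  rw [genError_eq, genError_eq, mass, ← ENNReal.tsum_add]
  refine ENNReal.tsum_le_tsum fun p => ?_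
  rw [← mul_add]
  gcongr
  by_cases h : maj A m r S p.1 = p.2
  · rw [ind_false (not_not.2 h)]; exact zero_le
  rw [ind_true h]
  by_cases h' : hs p.1 = p.2
  · rw [ind_true h', one_mul]
    exact (one_le_prod_of_maj h).trans le_add_self
  · rw [ind_true h']; exact le_self_add

theorem three_four (r : ℕ) : (r + 3) * 3 ^ r ≤ 3 * 4 ^ r := by
  induction r with
  | zero => norm_num
  | succ r ih =>
    calc (r + 1 + 3) * 3 ^ (r + 1) = (3 * r + 12) * 3 ^ r := by ring
      _ ≤ (4 * r + 12) * 3 ^ r := by gcongr; norm_num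
      _ = 4 * ((r + 3) * 3 ^ r) := by ring
      _ ≤ 4 * (3 * 4 ^ r) := by gcongr
      _ = _ := by ring

/-- With probability bounded below by an explicit constant depending only on `m` and `r`, a single
candidate is within `4 / r` of the competitor `hs`. -/
theorem good_candidate {A : Learner} {H : Set Hyp} {m : ℕ} (hA : PACCondition A H 6 m)
    (D : PMF (ℕ × Bool)) {hs : Hyp} (hhs : hs ∈ H) {r : ℕ} (hr : 0 < r) :
    1 ≤ (((2 * ((2 ^ r + 1) * r ^ 4) ^ m) ^ r : ℕ) : ℝ≥0∞) *
      ex D (r * m) (fun S => ind (r * genError D (maj A m r S) ≤ r * genError D hs + 4)) := by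
  have hr0 : (r : ℝ≥0∞) ≠ 0 := by simpa using hr.ne'
  have hrt : (r : ℝ≥0∞) ≠ ⊤ := ENNReal.natCast_ne_top r
  set ε : ℝ≥0∞ := ((r : ℝ≥0∞) ^ 2)⁻¹ with hε
  have hrε : (r : ℝ≥0∞) * (r * ε) = 1 := by
    rw [← mul_assoc, ← sq, hε, ENNReal.mul_inv_cancel (by simp [hr0]) (by simp)]
  have h1r : (1 : ℝ≥0∞) ≤ r := by exact_mod_cast hr
  have h1 : ε ≤ 1 := ENNReal.inv_le_one.2 (one_le_pow₀ h1r)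
  have h0 : ε ≠ 0 := by simp [hε]
  by_cases hm : ε ≤ mass D hs (fun _ => 1)
  · have h := rounds hA hhs h0 h1 hm r r (fun _ => 1) (fun _ => by simp)
    have hC : (2 * ((2 ^ r + 1) / (ε * ε)) ^ m) ^ r =
        (((2 * ((2 ^ r + 1) * r ^ 4) ^ m) ^ r : ℕ) : ℝ≥0∞) := by
      have : (ε * ε)⁻¹ = (r : ℝ≥0∞) ^ 4 := by
        rw [hε, ENNReal.mul_inv (by simp) (by simp), inv_inv]; ring
      push_cast
      rw [div_eq_mul_inv, this]
    rw [hC] at h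
    refine h.trans (mul_le_mul_right (ex_mono fun S _ => ?_) _)
    set Z := mass D hs (fun p => 1 * ∏ j ∈ Finset.range r, factor (A (chunk m S j)) p) with hZ
    by_cases hG : 4 ^ r * Z ≤ 3 ^ r * mass D hs (fun _ => 1) + r * 4 ^ r * ε
    swap
    · rw [ind_false hG]; exact zero_le
    rw [ind_true hG, ind_true]
    have hm1 : mass D hs (fun _ => 1) ≤ 1 := le_self_add.trans (genError_add_mass D hs).le
    have h34 : (r : ℝ≥0∞) * 3 ^ r ≤ 3 * 4 ^ r := by
      have : r * 3 ^ r ≤ 3 * 4 ^ r :=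
        (Nat.mul_le_mul_right _ (Nat.le_add_right r 3)).trans (three_four r)
      exact_mod_cast this
    have hrZ : r * Z ≤ 4 := by
      have : 4 ^ r * (r * Z) ≤ 4 ^ r * 4 := by
        calc 4 ^ r * (r * Z) = r * (4 ^ r * Z) := by ring
          _ ≤ r * (3 ^ r * 1 + r * 4 ^ r * ε) := by
              gcongr; exact hG.trans (by gcongr)
          _ = r * 3 ^ r + 4 ^ r * (r * (r * ε)) := by ring
          _ ≤ 3 * 4 ^ r + 4 ^ r * 1 := by rw [hrε]; gcongr
          _ = _ := by ring
      exact (ENNReal.mul_le_mul_iff_right (by simp) (by simp)).1 this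
    have hL := genError_maj_le D hs A m r S
    simp only [one_mul] at hZ
    rw [← hZ] at hL
    calc r * genError D (maj A m r S) ≤ r * (genError D hs + Z) := by gcongr
      _ = r * genError D hs + r * Z := mul_add _ _ _
      _ ≤ _ := by gcongr
  -- Otherwise `hs` is almost always wrong, so every hypothesis is good.
  · have hall : ∀ S, r * genError D (maj A m r S) ≤ r * genError D hs + 4 := fun S => by
      calc (r : ℝ≥0∞) * genError D (maj A m r S) ≤ r * 1 := by
            gcongr; exact genError_le_one _ _
        _ ≤ r * (ε + genError D hs) := by
            gcongr
            rw [← genError_add_mass D hs]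
            gcongr
            exact (not_le.1 hm).le
        _ ≤ r * genError D hs + r * (r * ε) := by
            rw [mul_add, add_comm]
            gcongr
            exact le_mul_of_one_le_left zero_le h1r
        _ ≤ _ := by rw [hrε]; gcongr; norm_num
    have : ∀ S, ind (r * genError D (maj A m r S) ≤ r * genError D hs + 4) = 1 :=
      fun S => ind_true (hall S)
    simp only [this, ex_const, mul_one]
    have : 1 ≤ (2 * ((2 ^ r + 1) * r ^ 4) ^ m) ^ r := Nat.one_le_iff_ne_zero.2 (by positivity)
    exact_mod_cast this

/-! ### Validation -/

theorem errs_cons (h : Hyp) (p : ℕ × Bool) (v : Sample) :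
    errs h (p :: v) = (h p.1 != p.2).toNat + errs h v := by
  unfold errs count
  rw [List.length_cons, Finset.sum_range_succ', add_comm]
  simp [wrongAt]

/-- The second moment of the centred number of errors. The offset `a` is what makes the induction
on the sample size work. -/
theorem second_moment (D : PMF (ℕ × Bool)) (h : Hyp) (V : ℕ) (a : ℝ) :
    ex D V (fun v => ENNReal.ofReal ((a + errs h v - V * (genError D h).toReal) ^ 2)) ≤
      ENNReal.ofReal (a ^ 2 + V) := by
  have hLt : genError D h ≠ ⊤ := ne_top_of_le_ne_top ENNReal.one_ne_top (genError_le_one D h)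
  have hMt : mass D h (fun _ => 1) ≠ ⊤ := by
    have := genError_add_mass D h
    exact ne_top_of_le_ne_top ENNReal.one_ne_top (le_self_add.trans this.le)
  set p := (genError D h).toReal with hp
  have hp0 : 0 ≤ p := ENNReal.toReal_nonneg
  have hM : (mass D h (fun _ => 1)).toReal = 1 - p := by
    have := congrArg ENNReal.toReal (genError_add_mass D h)
    rw [ENNReal.toReal_add hMt hLt, ENNReal.toReal_one] at this
    linarith
  have hp1 : 0 ≤ 1 - p := hM ▸ ENNReal.toReal_nonneg
  induction V generalizing a with
  | zero => simp [ex_zero, errs, count]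
  | succ V ih =>
    rw [ex_succ]
    calc _ ≤ ∑' x, D x * (ind (h x.1 = x.2) * ENNReal.ofReal ((a - p) ^ 2 + V) +
            ind (h x.1 ≠ x.2) * ENNReal.ofReal ((a + 1 - p) ^ 2 + V)) := by
          refine ENNReal.tsum_le_tsum fun x => mul_le_mul_right ?_ _
          by_cases hx : h x.1 = x.2
          · rw [ind_true hx, ind_false (not_not.2 hx), zero_mul, add_zero, one_mul]
            refine le_trans (le_of_eq (ex_congr fun v _ => ?_)) (ih (a - p))
            rw [errs_cons]
            congr 2
            simp [hx]; ring
          · rw [ind_false hx, ind_true hx, zero_mul, zero_add, one_mul]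
            refine le_trans (le_of_eq (ex_congr fun v _ => ?_)) (ih (a + 1 - p))
            rw [errs_cons]
            congr 2
            rw [bne_iff_ne.2 hx, Bool.toNat_true]
            push_cast
            ring
      _ = mass D h (fun _ => 1) * ENNReal.ofReal ((a - p) ^ 2 + V) +
            genError D h * ENNReal.ofReal ((a + 1 - p) ^ 2 + V) := by
          rw [genError_eq, mass, ← ENNReal.tsum_mul_right, ← ENNReal.tsum_mul_right,
            ← ENNReal.tsum_add]
          exact tsum_congr fun x => by ring
      _ = ENNReal.ofReal ((1 - p) * ((a - p) ^ 2 + V) + p * ((a + 1 - p) ^ 2 + V)) := by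
          rw [← ENNReal.ofReal_toReal hMt, ← ENNReal.ofReal_toReal hLt, hM, ← hp,
            ← ENNReal.ofReal_mul hp1, ← ENNReal.ofReal_mul hp0,
            ← ENNReal.ofReal_add (by positivity) (by positivity)]
      _ ≤ _ := by
          refine ENNReal.ofReal_le_ofReal ?_
          push_cast
          nlinarith [mul_nonneg hp0 hp1]

/-- The number of errors of `h` on the validation sample `v` of size `V` deviates from its
expectation by more than `V / r`. -/
def Deviates (D : PMF (ℕ × Bool)) (r V : ℕ) (h : Hyp) (v : Sample) : Prop :=
  (V : ℝ) < r * |(errs h v : ℝ) - V * (genError D h).toReal|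

/-- Chebyshev's inequality. -/
theorem deviates_le (D : PMF (ℕ × Bool)) {r K : ℕ} (hr : 0 < r) (hK : 0 < K) (h : Hyp) :
    ex D (K * r ^ 3) (fun v => ind (Deviates D r (K * r ^ 3) h v)) ≤
      ENNReal.ofReal (1 / (K * r)) := by
  set V := K * r ^ 3 with hV
  have hr' : (0 : ℝ) < r := by exact_mod_cast hr
  have hK' : (0 : ℝ) < K := by exact_mod_cast hK
  have hV' : (V : ℝ) = K * r ^ 3 := by rw [hV]; push_cast; rfl
  have hV0 : (0 : ℝ) < V := by rw [hV']; positivity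
  calc _ ≤ ex D V (fun v => ENNReal.ofReal ((0 + errs h v - V * (genError D h).toReal) ^ 2) *
          ENNReal.ofReal ((r / V) ^ 2)) := by
        refine ex_mono fun v _ => ?_
        by_cases hd : Deviates D r V h v
        swap
        · rw [ind_false hd]; exact zero_le
        rw [ind_true hd, ← ENNReal.ofReal_mul (by positivity), ENNReal.one_le_ofReal, zero_add,
          ← mul_pow, ← sq_abs, abs_mul, abs_of_pos (div_pos hr' hV0)]
        refine one_le_pow₀ ?_
        unfold Deviates at hd
        rw [mul_div_assoc', le_div_iff₀ hV0]
        linarith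
    _ ≤ ENNReal.ofReal (0 ^ 2 + V) * ENNReal.ofReal ((r / V) ^ 2) := by
        rw [ex_mul_right]
        gcongr
        exact second_moment D h V 0
    _ = _ := by
        rw [← ENNReal.ofReal_mul (by positivity)]
        congr 1
        rw [hV']
        field_simp
        ring

theorem argmin_spec (f : ℕ → ℕ) {n i : ℕ} (hi : i < n) :
    argmin f n < n ∧ f (argmin f n) ≤ f i := by
  induction n generalizing i with
  | zero => omega
  | succ n ih =>
    have e : argmin f (n + 1) = if f n < f (argmin f n) then n else argmin f n := rfl
    rcases Nat.eq_zero_or_pos n with rfl | hn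
    · obtain rfl : i = 0 := by omega
      rw [e]
      split_ifs <;> simp [argmin]
    have h0 := (ih hn).1
    rw [e]
    rcases Nat.lt_succ_iff_lt_or_eq.1 hi with h | rfl
    · have := (ih h).2
      split_ifs <;> omega
    · split_ifs <;> omega

theorem argmin_congr {f g : ℕ → ℕ} {n : ℕ} (h : ∀ i < n, f i = g i) :
    argmin f n = argmin g n := by
  induction n with
  | zero => rfl
  | succ n ih =>
    have e : ∀ f, argmin f (n + 1) = if f n < f (argmin f n) then n else argmin f n :=
      fun _ => rfl
    have ih' := ih fun i hi => h i (by omega)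
    rcases Nat.eq_zero_or_pos n with rfl | hn
    · rw [e, e]; simp [argmin]
    · rw [e, e, ih', h n (by omega), h _ (Nat.lt_succ_of_lt (argmin_spec g hn).1)]

/-! ### The combined guarantee -/

theorem cand_append {A : Learner} {m r K i : ℕ} {s : Sample} (hs : s.length = K * (r * m))
    (hi : i < K) (v : Sample) : cand A m r (s ++ v) i = cand A m r s i := by
  have h1 : i * (r * m) + r * m ≤ s.length := by
    rw [hs, ← Nat.succ_mul]
    exact Nat.mul_le_mul_right _ hi
  unfold cand chunk
  rw [List.drop_append_of_le_length (by omega),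
    List.take_append_of_le_length (by rw [List.length_drop]; omega)]

/-- If some candidate is good and no candidate deviates on the validation sample, the selected
candidate is good. -/
theorem select_good {D : PMF (ℕ × Bool)} {A : Learner} {m r K V i : ℕ} {s v : Sample} {hs : Hyp}
    (hV : 0 < V) (hi : i < K)
    (hgood : r * genError D (cand A m r s i) ≤ r * genError D hs + 4)
    (hdev : ∀ k < K, ¬Deviates D r V (cand A m r s k) v) :
    r * genError D (cand A m r s (argmin (fun k => errs (cand A m r s k) v) K)) ≤
      r * genError D hs + 6 := by
  obtain ⟨hb, hbi⟩ := argmin_spec (fun k => errs (cand A m r s k) v) hi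
  set b := argmin (fun k => errs (cand A m r s k) v) K
  have hLt : ∀ h, genError D h ≠ ⊤ := fun h =>
    ne_top_of_le_ne_top ENNReal.one_ne_top (genError_le_one D h)
  have conv : ∀ (h : Hyp) (c : ℕ), r * genError D h ≤ r * genError D hs + (c : ℝ≥0∞) ↔
      r * (genError D h).toReal ≤ r * (genError D hs).toReal + (c : ℝ) := fun h c => by
    have e1 : (r : ℝ≥0∞) * genError D h = ENNReal.ofReal (r * (genError D h).toReal) := by
      rw [ENNReal.ofReal_mul (by positivity), ENNReal.ofReal_natCast,
        ENNReal.ofReal_toReal (hLt h)]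
    have e2 : (r : ℝ≥0∞) * genError D hs + (c : ℝ≥0∞) =
        ENNReal.ofReal (r * (genError D hs).toReal + c) := by
      rw [ENNReal.ofReal_add (by positivity) (by positivity), ENNReal.ofReal_mul (by positivity),
        ENNReal.ofReal_natCast, ENNReal.ofReal_natCast, ENNReal.ofReal_toReal (hLt hs)]
    rw [e1, e2, ENNReal.ofReal_le_ofReal_iff (by positivity)]
  have hg := (conv _ 4).1 (by exact_mod_cast hgood)
  have h6 := (conv (cand A m r s b) 6).2
  refine le_trans (h6 ?_) (by norm_num)
  have d1 := not_lt.1 (hdev b hb)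
  have d2 := not_lt.1 (hdev i hi)
  have hr : (0 : ℝ) ≤ r := by positivity
  have hV' : (0 : ℝ) < V := by exact_mod_cast hV
  have hbi' : (errs (cand A m r s b) v : ℝ) ≤ errs (cand A m r s i) v := by exact_mod_cast hbi
  have a1 := mul_le_mul_of_nonneg_left
    (neg_abs_le ((errs (cand A m r s b) v : ℝ) - V * (genError D (cand A m r s b)).toReal)) hr
  have a2 := mul_le_mul_of_nonneg_left
    (le_abs_self ((errs (cand A m r s i) v : ℝ) - V * (genError D (cand A m r s i)).toReal)) hr
  have a3 := mul_le_mul_of_nonneg_left hbi' hr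
  push_cast at hg ⊢
  have a4 := mul_le_mul_of_nonneg_left hg hV'.le
  refine le_of_mul_le_mul_left ?_ hV'
  linarith

theorem one_sub_inv_pow_le {Q r : ℕ} (hQ : 0 < Q) (hr : 0 < r) :
    (1 - (Q : ℝ≥0∞)⁻¹) ^ (Q * r) ≤ ENNReal.ofReal (1 / r) := by
  have hQ' : (0 : ℝ) < Q := by exact_mod_cast hQ
  have hr' : (0 : ℝ) < r := by exact_mod_cast hr
  have h1 : (1 : ℝ≥0∞) - (Q : ℝ≥0∞)⁻¹ = ENNReal.ofReal (1 - (Q : ℝ)⁻¹) := by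
    rw [ENNReal.ofReal_sub _ (by positivity), ENNReal.ofReal_one,
      ENNReal.ofReal_inv_of_pos hQ', ENNReal.ofReal_natCast]
  have h2 : (0 : ℝ) ≤ 1 - (Q : ℝ)⁻¹ := by
    have : (Q : ℝ)⁻¹ ≤ 1 := inv_le_one_of_one_le₀ (by exact_mod_cast hQ)
    linarith
  rw [h1, ← ENNReal.ofReal_pow h2]
  refine ENNReal.ofReal_le_ofReal ?_
  calc (1 - (Q : ℝ)⁻¹) ^ (Q * r) ≤ (Real.exp (-(Q : ℝ)⁻¹)) ^ (Q * r) := by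
        refine pow_le_pow_left₀ h2 ?_ _
        have := Real.add_one_le_exp (-(Q : ℝ)⁻¹)
        linarith
    _ = (Real.exp r)⁻¹ := by
        rw [← Real.exp_nat_mul, ← Real.exp_neg]
        congr 1
        push_cast
        field_simp
    _ ≤ 1 / r := by
        rw [one_div]
        refine inv_anti₀ hr' ?_
        have := Real.add_one_le_exp (r : ℝ)
        linarith

/-- On samples of exactly the required size, `stage` competes with any fixed `hs ∈ H` up to `6 / r`
with failure probability at most `2 / r`. -/
theorem stage_good {A : Learner} {H : Set Hyp} {m : ℕ} (hA : PACCondition A H 6 m)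
    (D : PMF (ℕ × Bool)) {hs : Hyp} (hhs : hs ∈ H) {r : ℕ} (hr : 0 < r) :
    ex D (total m r) (fun S => ind (¬ (r * genError D (stage A m r S) ≤
      r * genError D hs + 6))) ≤ ENNReal.ofReal (2 / r) := by
  have hr' : (0 : ℝ) < r := by exact_mod_cast hr
  set Q := (2 * ((2 ^ r + 1) * r ^ 4) ^ m) ^ r with hQ
  have hQ0 : 0 < Q := by positivity
  have hKQ : numCand m r = Q * r := rfl
  have hVr : numVal m r = numCand m r * r ^ 3 := rfl
  have hK0 : 0 < numCand m r := by rw [hKQ]; positivity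
  have hV0 : 0 < numVal m r := by rw [hVr]; positivity
  have hblocks := ex_blocks (D := D) (L := r * m) (q := (Q : ℝ≥0∞)⁻¹)
    (G := fun S => r * genError D (maj A m r S) ≤ r * genError D hs + 4) (by
      have := good_candidate hA D hhs hr
      rw [← one_div]
      exact ENNReal.div_le_of_le_mul' this) (numCand m r)
  rw [total, ex_append]
  calc _ ≤ ex D (numCand m r * (r * m)) (fun s =>
          ind (∀ i < numCand m r, ¬ (r * genError D (maj A m r (chunk (r * m) s i))
            ≤ r * genError D hs + 4)) + numCand m r * ENNReal.ofReal (1 / (numCand m r * r))) := by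
        refine ex_mono fun s hslen => ?_
        have hle : ex D (numVal m r) (fun v =>
            ∑ i ∈ Finset.range (numCand m r), ind (Deviates D r (numVal m r) (cand A m r s i) v))
            ≤ numCand m r * ENNReal.ofReal (1 / (numCand m r * r)) := by
          rw [ex_sum]
          refine (Finset.sum_le_card_nsmul _ _ _ fun i _ => deviates_le D hr hK0 _).trans ?_
          simp
        refine le_trans ?_ (add_le_add_right hle _)
        rw [← ex_const D (numVal m r) (ind (∀ i < numCand m r, _)), ← ex_add]
        refine ex_mono fun v _ => ?_
        by_cases h1 : ∀ i < numCand m r, ¬ (r * genError D (maj A m r (chunk (r * m) s i))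
            ≤ r * genError D hs + 4)
        · rw [ind_true h1]; exact (ind_le_one _).trans le_self_add
        push Not at h1
        obtain ⟨i, hi, hgood⟩ := h1
        by_cases h2 : ∀ k < numCand m r, ¬Deviates D r (numVal m r) (cand A m r s k) v
        · rw [ind_false]
          · exact zero_le
          rw [not_not]
          have hsel := select_good hV0 hi hgood h2
          have hdrop : (s ++ v).drop (numCand m r * (r * m)) = v := by
            rw [← hslen, List.drop_left]
          have harg : argmin (fun k => errs (cand A m r (s ++ v) k) v) (numCand m r) =
              argmin (fun k => errs (cand A m r s k) v) (numCand m r) := 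
            argmin_congr fun k hk => by rw [cand_append hslen hk]
          unfold stage
          rw [hdrop, harg, cand_append hslen (argmin_spec _ hi).1]
          exact hsel
        · push Not at h2
          obtain ⟨k, hk, hd⟩ := h2
          refine (ind_le_one _).trans (le_trans ?_ le_add_self)
          rw [← ind_true hd]
          exact Finset.single_le_sum
            (f := fun i => ind (Deviates D r (numVal m r) (cand A m r s i) v))
            (fun _ _ => zero_le) (Finset.mem_range.2 hk)
    _ ≤ ENNReal.ofReal (1 / r) + ENNReal.ofReal (1 / r) := by
        rw [ex_add, ex_const]
        refine add_le_add (hblocks.trans ?_) (le_of_eq ?_)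
        · rw [hKQ]; exact one_sub_inv_pow_le hQ0 hr
        · rw [← ENNReal.ofReal_natCast, ← ENNReal.ofReal_mul (by positivity)]
          congr 1
          have : (numCand m r : ℝ) ≠ 0 := by exact_mod_cast hK0.ne'
          field_simp
    _ = _ := by
        rw [← ENNReal.ofReal_add (by positivity) (by positivity)]
        congr 1
        ring

theorem le_total (m r : ℕ) : r ≤ total m r := by
  rcases Nat.eq_zero_or_pos r with rfl | hr
  · exact Nat.zero_le _
  have h1 : r ≤ numCand m r := by
    unfold numCand
    exact Nat.le_mul_of_pos_left _ (by positivity)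
  calc r ≤ numCand m r := h1
    _ ≤ numVal m r := Nat.le_mul_of_pos_right _ (by positivity)
    _ ≤ _ := Nat.le_add_left _ _

theorem param_spec {m r N : ℕ} (h : total m r ≤ N) :
    r ≤ param m N ∧ total m (param m N) ≤ N :=
  have hr := (le_total m r).trans h
  ⟨Nat.le_findGreatest hr h, Nat.findGreatest_spec (P := fun r => total m r ≤ N) hr h⟩

/-- From a single instance of the PAC inequality for `A` to all instances for `learner A m`, with an
explicit bound on the sample size. -/
theorem learner_pac {A : Learner} {H : Set Hyp} {m : ℕ} (hA : PACCondition A H 6 m) (n : ℕ)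
    {N : ℕ} (hN : total m (8 * n) ≤ N) : PACCondition (learner A m) H n N := by
  intro D
  rcases Nat.eq_zero_or_pos n with rfl | hn
  · simp
  rw [samplePr_eq]
  refine ex_ind_not ?_
  obtain ⟨hr8, htot⟩ := param_spec hN
  set r := param m N with hr
  have hr0 : 0 < r := by omega
  have hn' : (0 : ℝ) < n := by exact_mod_cast hn
  have hr' : (0 : ℝ) < r := by exact_mod_cast hr0
  have hrn : (8 : ℝ) * n ≤ r := by exact_mod_cast hr8
  have hre : (r : ℝ≥0∞) ≠ 0 := by exact_mod_cast hr0.ne'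
  rcases H.eq_empty_or_nonempty with rfl | ⟨h₀, hh₀⟩
  · refine le_of_eq_of_le ((ex_congr fun S _ => ind_false ?_).trans (ex_const D _ 0)) zero_le
    simp
  have hinf : (⨅ h ∈ H, genError D h) ≠ ⊤ := ne_top_of_le_ne_top ENNReal.one_ne_top
    ((iInf₂_le h₀ hh₀).trans (genError_le_one D h₀))
  obtain ⟨hs, hhs, hlt⟩ : ∃ hs ∈ H, genError D hs <
      (⨅ h ∈ H, genError D h) + (r : ℝ≥0∞)⁻¹ := by
    have := ENNReal.lt_add_right hinf (ENNReal.inv_ne_zero.2 (ENNReal.natCast_ne_top r))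
    simpa [iInf_lt_iff] using this
  have hinvn : ((n : ℝ≥0∞))⁻¹ = ENNReal.ofReal (n : ℝ)⁻¹ := by
    rw [ENNReal.ofReal_inv_of_pos hn', ENNReal.ofReal_natCast]
  calc _ ≤ ex D N (fun S => ind (¬ (r * genError D (stage A m r (S.take (total m r))) ≤
      r * genError D hs + 6))) := by
        refine ex_mono fun S hS => ?_
        have hlearn : learner A m S = stage A m r (S.take (total m r)) := by
          simp only [learner, hS, ← hr]
        by_cases hG : r * genError D (stage A m r (S.take (total m r))) ≤
          r * genError D hs + 6
        swap
        · rw [ind_true hG]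
          exact ind_le_one _
        rw [ind_false]
        · exact zero_le
        rw [not_not, Set.mem_ofPred_eq, hlearn]
        set L := genError D (stage A m r (S.take (total m r)))
        have h7 : r * L ≤ r * ((⨅ h ∈ H, genError D h) + 7 / r) := by
          calc r * L ≤ r * genError D hs + 6 := hG
            _ ≤ r * ((⨅ h ∈ H, genError D h) + (r : ℝ≥0∞)⁻¹) + 6 := by gcongr
            _ = _ := by
              rw [mul_add, mul_add, ENNReal.mul_inv_cancel hre (ENNReal.natCast_ne_top r),
                ENNReal.mul_div_cancel hre (ENNReal.natCast_ne_top r), add_assoc]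
              norm_num
        refine ((ENNReal.mul_le_mul_iff_right hre (ENNReal.natCast_ne_top r)).1 h7).trans ?_
        gcongr
        rw [hinvn, ← ENNReal.ofReal_natCast, ← ENNReal.ofReal_ofNat 7,
          ← ENNReal.ofReal_div_of_pos hr']
        refine ENNReal.ofReal_le_ofReal ?_
        rw [inv_eq_one_div, div_le_div_iff₀ hr' hn']
        linarith
    _ ≤ ENNReal.ofReal (2 / r) := by
        rw [ex_take D htot (fun S => ind (¬ (r * genError D (stage A m r S) ≤
          r * genError D hs + 6)))]
        exact stage_good hA D hhs hr0
    _ ≤ _ := by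
        rw [hinvn]
        refine ENNReal.ofReal_le_ofReal ?_
        rw [inv_eq_one_div, div_le_div_iff₀ hr' hn']
        linarith

theorem scpac_of_cpac {H : Set Hyp} (h : CPACLearnable H) : SCPACLearnable H := by
  obtain ⟨A, hA, hL⟩ := h
  -- A single sample size at which the accuracy and confidence `1 / 6` are reached suffices.
  obtain ⟨m, hm⟩ := hL 6
  have hpac := hm m le_rfl
  refine ⟨learner A m, learner_computable hA m,
    fun n => ⟨total m (8 * n), fun N hN => learner_pac hpac n hN⟩,
    fun n => total m (8 * n), ?_, fun n => Nat.sInf_le fun N hN => learner_pac hpac n hN⟩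
  exact ((total_prim m).comp (Primrec.nat_mul.comp (.const 8) .id)).to_comp

end AgnBoost

/-- `H` is CPAC learnable iff it is SCPAC learnable. -/
theorem CPAC_iff_SCPAC (H : Set Hyp) : CPACLearnable H ↔ SCPACLearnable H := by
  exact ⟨AgnBoost.scpac_of_cpac, fun ⟨A, hA, hL, _⟩ => ⟨A, hA, hL⟩⟩
end
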